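/- arXiv:2202.07900 — 7 statements merged into one kernel-verified Lean document; each statement's English description precedes it below -/
import Mathlib

section
/- Let R be an associative ring with unity. The class of semisimple left R-modules is λ-categorical in all cardinals λ > card(R) + ℵ₀ if and only if it is λ-categorical in some cardinal λ > card(R) + ℵ₀. -/
/-! Statement 1: for the class of semisimple left `R`-modules, categoricity in all
cardinals `> card R + ℵ₀` is equivalent to categoricity in some cardinal `> card R + ℵ₀`. -/

universe u

open Cardinal

/-- A class `K` of left `R`-modules is `c`-categorical if it contains a module of
cardinality `c` and any two modules in `K` of cardinality `c` are isomorphic. -/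
def Categorical (R : Type u) [Ring R] (K : ModuleCat.{u} R → Prop) (c : Cardinal.{u}) : Prop :=
  (∃ M : ModuleCat.{u} R, K M ∧ #M = c) ∧
    ∀ M N : ModuleCat.{u} R, K M → K N → #M = c → #N = c → Nonempty (M ≃ₗ[R] N)

theorem simple_card_le (R S : Type u) [Ring R] [AddCommGroup S] [Module R S]
    [IsSimpleModule R S] : #S ≤ #R := by
  have := IsSimpleModule.nontrivial R S
  obtain ⟨m, hm⟩ := exists_ne (0 : S)
  exact mk_le_of_surjective (IsSimpleModule.toSpanSingleton_surjective R hm)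

theorem card_finsupp_big (R S ι : Type u) [Ring R] [AddCommGroup S] [Module R S]
    [IsSimpleModule R S] (c : Cardinal.{u}) (hc : #R + ℵ₀ < c) :
    #(ι →₀ S) = c ↔ #ι = c := by
  have := IsSimpleModule.nontrivial R S
  have h1 : #S < c := ((simple_card_le R S).trans (self_le_add_right _ _)).trans_lt hc
  have h2 : ℵ₀ < c := (self_le_add_left _ _).trans_lt hc
  cases fintypeOrInfinite ι
  · have h3 : #(ι →₀ S) < c := by
      rw [mk_finsupp_of_fintype]
      exact (power_nat_le_max (c := #S)).trans_lt (max_lt h1 h2)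
    have h4 : #ι < c := (lt_aleph0_of_finite ι).trans h2
    exact ⟨fun h => absurd h h3.ne, fun h => absurd h h4.ne⟩
  · rw [mk_finsupp_of_infinite]
    constructor
    · intro h
      rcases max_choice #ι #S with h' | h'
      · rw [← h, h']
      · rw [h'] at h
        exact absurd h h1.ne
    · rintro rfl
      exact max_eq_left h1.le

theorem simple_iso (R S T ι κ : Type u) [Ring R] [AddCommGroup S] [Module R S]
    [IsSimpleModule R S] [AddCommGroup T] [Module R T] [IsSimpleModule R T] (i : ι)
    (e : (ι →₀ S) ≃ₗ[R] (κ →₀ T)) : Nonempty (S ≃ₗ[R] T) := by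
  have := IsSimpleModule.nontrivial R S
  obtain ⟨s, hs⟩ := exists_ne (0 : S)
  have h : e (Finsupp.single i s) ≠ 0 := by simpa using hs
  obtain ⟨k, hk⟩ := Finsupp.ne_iff.mp h
  let f : S →ₗ[R] T := Finsupp.lapply k ∘ₗ e.toLinearMap ∘ₗ Finsupp.lsingle i
  rcases LinearMap.bijective_or_eq_zero f with hf | hf
  · exact ⟨LinearEquiv.ofBijective f hf⟩
  · exact absurd (LinearMap.congr_fun hf s) hk

theorem stmt1 (R : Type u) [Ring R] :
    (∀ c : Cardinal.{u}, #R + ℵ₀ < c →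
      Categorical R (fun M => IsSemisimpleModule R M) c) ↔
    (∃ c : Cardinal.{u}, #R + ℵ₀ < c ∧
      Categorical R (fun M => IsSemisimpleModule R M) c) := by
  constructor
  · intro h
    exact ⟨_, Order.lt_succ _, h _ (Order.lt_succ _)⟩
  · rintro ⟨c, hc, ⟨M₀, -, hM₀⟩, hu⟩ d hd
    have : Nontrivial R := by
      by_contra hR
      rw [not_nontrivial_iff_subsingleton] at hR
      have := Module.subsingleton R M₀
      have h1 : #M₀ ≤ 1 := le_one_iff_subsingleton.mpr this
      have h2 : ℵ₀ < c := (self_le_add_left _ _).trans_lt hc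
      rw [hM₀] at h1
      exact absurd (h2.trans_le h1) (not_lt.mpr one_lt_aleph0.le)
    obtain ⟨I, hI⟩ := Ideal.exists_maximal R
    have hS : IsSimpleModule R (R ⧸ I) := isSimpleModule_iff_isCoatom.mpr hI.out
    have key : ∀ (T : Type u) [AddCommGroup T] [Module R T] [IsSimpleModule R T],
        Nonempty (T ≃ₗ[R] R ⧸ I) := by
      intro T _ _ _
      have hne : Nonempty c.out := by
        rw [← mk_ne_zero_iff, mk_out]
        exact (pos_of_gt hc).ne'
      obtain ⟨e⟩ := hu (ModuleCat.of R (c.out →₀ T)) (ModuleCat.of R (c.out →₀ (R ⧸ I)))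
        (inferInstanceAs (IsSemisimpleModule R (c.out →₀ T)))
        (inferInstanceAs (IsSemisimpleModule R (c.out →₀ (R ⧸ I))))
        ((card_finsupp_big R T c.out c hc).mpr (mk_out c))
        ((card_finsupp_big R (R ⧸ I) c.out c hc).mpr (mk_out c))
      exact simple_iso R T (R ⧸ I) c.out c.out hne.some e
    refine ⟨⟨ModuleCat.of R (d.out →₀ (R ⧸ I)),
      inferInstanceAs (IsSemisimpleModule R (d.out →₀ (R ⧸ I))),
      (card_finsupp_big R (R ⧸ I) d.out d hd).mpr (mk_out d)⟩, ?_⟩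
    intro M N hM hN hMd hNd
    have hM' : IsSemisimpleModule R M := hM
    have hN' : IsSemisimpleModule R N := hN
    have iM : IsIsotypicOfType R M (R ⧸ I) := fun m _ => key m
    have iN : IsIsotypicOfType R N (R ⧸ I) := fun m _ => key m
    obtain ⟨α, ⟨eM⟩⟩ := iM.linearEquiv_finsupp
    obtain ⟨β, ⟨eN⟩⟩ := iN.linearEquiv_finsupp
    have hα : #α = d := (card_finsupp_big R (R ⧸ I) α d hd).mp
      (by rw [← hMd]; exact eM.symm.toEquiv.cardinal_eq)
    have hβ : #β = d := (card_finsupp_big R (R ⧸ I) β d hd).mp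
      (by rw [← hNd]; exact eN.symm.toEquiv.cardinal_eq)
    obtain ⟨g⟩ := Cardinal.eq.mp (hα.trans hβ.symm)
    exact ⟨eM.trans ((Finsupp.domLCongr g).trans eN.symm)⟩
end

section
/- Let R be an associative ring with unity. The class of Σ-injective left R-modules is λ-categorical in all cardinals λ > card(R) + ℵ₀ if and only if it is λ-categorical in some cardinal λ > card(R) + ℵ₀. -/
/-! Statement 2: for the class of Σ-injective left `R`-modules, categoricity in all
cardinals `> card R + ℵ₀` is equivalent to categoricity in some cardinal `> card R + ℵ₀`. -/

universe u

open Cardinal DirectSum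

/-- A module `M` is Σ-injective if the direct sum of `I` copies of `M` is injective for
every index set `I`. -/
def SigmaInjective (R : Type u) [Ring R] (M : ModuleCat.{u} R) : Prop :=
  ∀ I : Type u, Module.Injective R (⨁ _ : I, (M : Type u))

section Aux
variable {R : Type u} [Ring R]

lemma inj_retract {M A : Type u} [AddCommGroup M] [Module R M] [AddCommGroup A] [Module R A]
    (h : Module.Injective R M) (i : A →ₗ[R] M) (p : M →ₗ[R] A) (hp : ∀ a, p (i a) = a) :
    Module.Injective R A := by
  constructor
  intro X Y _ _ _ _ f hf g
  obtain ⟨k, hk⟩ := h.out f hf (i ∘ₗ g)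
  exact ⟨p ∘ₗ k, fun x => by simp [hk, hp]⟩

def SI (R : Type u) [Ring R] (M : Type u) [AddCommGroup M] [Module R M] : Prop :=
  ∀ I : Type u, Module.Injective R (I →₀ M)

lemma SI.retract {M A : Type u} [AddCommGroup M] [Module R M] [AddCommGroup A] [Module R A]
    (h : SI R M) (i : A →ₗ[R] M) (p : M →ₗ[R] A) (hp : ∀ a, p (i a) = a) :
    SI R A := by
  intro I
  refine inj_retract (h I) (Finsupp.mapRange.linearMap i) (Finsupp.mapRange.linearMap p) ?_
  intro a
  ext j
  simp [hp]

lemma SI.inj {M : Type u} [AddCommGroup M] [Module R M] (h : SI R M) : Module.Injective R M :=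
  inj_retract (h PUnit) (Finsupp.lsingle PUnit.unit) (Finsupp.lapply PUnit.unit) (by simp)

lemma SI.finsupp {M : Type u} [AddCommGroup M] [Module R M] (h : SI R M) (J : Type u) :
    SI R (J →₀ M) := by
  intro I
  let e := (Finsupp.curryLinearEquiv R (α := I) (β := J) (M := M))
  exact inj_retract (h (I × J)) e.symm.toLinearMap e.toLinearMap (by simp)

lemma exists_retraction {M : Type u} [AddCommGroup M] [Module R M] (A : Submodule R M)
    (h : Module.Injective R A) : ∃ p : M →ₗ[R] A, ∀ a : A, p a = a := by
  obtain ⟨p, hp⟩ := h.out A.subtype A.subtype_injective LinearMap.id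
  exact ⟨p, by simpa using hp⟩

lemma SI.sub {M : Type u} [AddCommGroup M] [Module R M] (h : SI R M) (A : Submodule R M)
    (hA : Module.Injective R A) : SI R A := by
  obtain ⟨p, hp⟩ := exists_retraction A hA
  exact h.retract A.subtype p (by simpa using hp)

lemma exists_compl_inj {M : Type u} [AddCommGroup M] [Module R M] (h : Module.Injective R M)
    (A : Submodule R M)
    (hA : Module.Injective R A) : ∃ B : Submodule R M, IsCompl A B ∧ Module.Injective R B := by
  obtain ⟨p, hp⟩ := exists_retraction A hA
  have hc := LinearMap.isCompl_of_proj hp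
  refine ⟨_, hc, ?_⟩
  exact inj_retract h (Submodule.subtype _) (Submodule.projectionOnto _ _ hc.symm) (by simp)

lemma inj_equiv {M A : Type u} [AddCommGroup M] [Module R M] [AddCommGroup A] [Module R A]
    (h : Module.Injective R M) (e : M ≃ₗ[R] A) : Module.Injective R A :=
  inj_retract h e.symm.toLinearMap e.toLinearMap (by simp)

/-- internal decomposition -/
lemma exists_dec {M : Type u} [AddCommGroup M] [Module R M] (S : Set (Submodule R M))
    (hS : sSupIndep S) : Nonempty ((Π₀ A : S, A.1) ≃ₗ[R] (sSup S : Submodule R M)) := by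
  classical
  rw [sSupIndep_iff] at hS
  have h1 := hS.dfinsupp_lsum_injective
  have h2 := Submodule.iSup_eq_range_dfinsupp_lsum (fun A : S => A.1)
  rw [sSup_eq_iSup', h2]
  exact ⟨LinearEquiv.ofInjective _ h1⟩

lemma SI.inj_sSup {M : Type u} [AddCommGroup M] [Module R M] (h : SI R M)
    (S : Set (Submodule R M)) (hS : sSupIndep S) (hi : ∀ A ∈ S, Module.Injective R A) :
    Module.Injective R (sSup S : Submodule R M) := by
  classical
  obtain ⟨e⟩ := exists_dec S hS
  have : ∀ A : S, ∃ p : M →ₗ[R] A.1, ∀ a : A.1, p a = a :=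
    fun A => exists_retraction A.1 (hi A.1 A.2)
  choose p hp using this
  have h1 : Module.Injective R (Π₀ _ : S, M) := inj_equiv (h S) (finsuppLequivDFinsupp R)
  refine inj_equiv ?_ e
  refine inj_retract h1 (DFinsupp.mapRange.linearMap fun A => A.1.subtype)
    (DFinsupp.mapRange.linearMap p) ?_
  intro a
  ext j
  simp [hp]

lemma sSupIndep_insert' {M : Type u} [AddCommGroup M] [Module R M] (S : Set (Submodule R M))
    (hS : sSupIndep S) (D : Submodule R M) (hD : Disjoint D (sSup S)) :
    sSupIndep (insert D S) := by
  intro a ha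
  rcases Set.mem_insert_iff.1 ha with rfl | ha
  · refine hD.mono_right (sSup_le_sSup ?_)
    rintro b ⟨hb, hb'⟩
    rcases Set.mem_insert_iff.1 hb with rfl | hb
    · exact (hb' rfl).elim
    · exact hb
  · have h1 : sSup (insert D S \ {a}) ≤ sSup (S \ {a}) ⊔ D := by
      refine sSup_le ?_
      rintro b ⟨hb, hb'⟩
      rcases Set.mem_insert_iff.1 hb with rfl | hb
      · exact le_sup_right
      · exact le_sup_of_le_left (le_sSup ⟨hb, hb'⟩)
    refine Disjoint.mono_right h1 ?_
    refine Disjoint.disjoint_sup_right_of_disjoint_sup_left (hS ha) ?_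
    refine (hD.mono_right ?_).symm
    exact sup_le (le_sSup ha) (sSup_le_sSup Set.sdiff_subset)

lemma zorn_family {M : Type u} [AddCommGroup M] [Module R M] (P : Submodule R M → Prop)
    (X : Set M) (hX : (0 : M) ∉ X) :
    ∃ S : Set (Submodule R M), sSupIndep S ∧ (∀ A ∈ S, P A) ∧ (∀ x ∈ X, x ∉ sSup S) ∧
      ∀ D, P D → D ≠ ⊥ → Disjoint D (sSup S) → ∃ x ∈ X, x ∈ sSup S ⊔ D := by
  obtain ⟨S, -, hS⟩ := zorn_subset_nonempty
    {S : Set (Submodule R M) | sSupIndep S ∧ (∀ A ∈ S, P A) ∧ (∀ x ∈ X, x ∉ sSup S)} (by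
      intro c hc hchain hne
      refine ⟨⋃₀ c, ⟨iSupIndep_sUnion_of_directed hchain.directedOn fun a ha => (hc ha).1,
        ?_, ?_⟩, fun s hs => Set.subset_sUnion_of_mem hs⟩
      · rintro A ⟨s, hs, hA⟩
        exact (hc hs).2.1 A hA
      · intro x hx hmem
        rw [sSup_sUnion, ← sSup_image] at hmem
        rw [Submodule.mem_sSup_of_directed (hne.image _)] at hmem
        · obtain ⟨_, ⟨s, hs, rfl⟩, hxs⟩ := hmem
          exact (hc hs).2.2 x hx hxs
        · rintro _ ⟨s, hs, rfl⟩ _ ⟨t, ht, rfl⟩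
          rcases hchain.total hs ht with h | h
          · exact ⟨_, ⟨t, ht, rfl⟩, sSup_le_sSup h, le_rfl⟩
          · exact ⟨_, ⟨s, hs, rfl⟩, le_rfl, sSup_le_sSup h⟩)
    ∅ (by
      refine ⟨sSupIndep_empty, by simp, ?_⟩
      intro x hx h0
      simp at h0
      exact hX (h0 ▸ hx))
  refine ⟨S, hS.prop.1, hS.prop.2.1, hS.prop.2.2, ?_⟩
  intro D hPD hD hdis
  by_contra! hcon
  have hm : insert D S ⊆ S := by
    refine hS.le_of_ge ⟨sSupIndep_insert' S hS.prop.1 D hdis, ?_, ?_⟩ (Set.subset_insert _ _)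
    · intro A hA
      rcases Set.mem_insert_iff.1 hA with rfl | hA
      · exact hPD
      · exact hS.prop.2.1 A hA
    · intro x hx
      rw [sSup_insert, sup_comm]
      exact hcon x hx
  exact hD (disjoint_self.1 (hdis.mono_right (le_sSup (hm (Set.mem_insert _ _)))))

/-- Indecomposable (for injective modules). -/
def Indec (R : Type u) [Ring R] (E : Type u) [AddCommGroup E] [Module R E] : Prop :=
  Nontrivial E ∧ ∀ A : Submodule R E, Module.Injective R A → A = ⊥ ∨ A = ⊤

lemma SI.exists_indec {M : Type u} [AddCommGroup M] [Module R M] [Nontrivial M] (h : SI R M) :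
    ∃ D : Submodule R M, Module.Injective R D ∧ Indec R D := by
  obtain ⟨x, hx⟩ := exists_ne (0 : M)
  obtain ⟨S, hS, hP, hxS, hmax⟩ := zorn_family (fun A : Submodule R M => Module.Injective R A)
    {x} (by simpa using hx.symm)
  simp only [Set.mem_singleton_iff, forall_eq, exists_eq_left] at hxS hmax
  obtain ⟨D, hD, hDi⟩ := exists_compl_inj h.inj _ (h.inj_sSup S hS hP)
  refine ⟨D, hDi, ?_, ?_⟩
  · rw [Submodule.nontrivial_iff_ne_bot]
    rintro rfl
    have := hD.sup_eq_top
    rw [sup_bot_eq] at this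
    rw [this] at hxS
    exact hxS trivial
  · intro A hA
    by_contra! hcon
    obtain ⟨B, hAB, hB⟩ := exists_compl_inj hDi A hA
    have key : ∀ C : Submodule R D, Module.Injective R C → C ≠ ⊥ →
        x ∈ sSup S ⊔ C.map D.subtype := by
      intro C hC hC0
      refine hmax _ (inj_equiv hC (Submodule.equivSubtypeMap D C)) ?_ ?_
      · have : Nontrivial C := (Submodule.nontrivial_iff_ne_bot).2 hC0
        exact (Submodule.nontrivial_iff_ne_bot).1
          (Submodule.equivSubtypeMap D C).symm.toEquiv.nontrivial
      · exact (hD.disjoint.mono_right (Submodule.map_subtype_le _ _)).symm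
    have h1 := key A hA hcon.1
    have h2 := key B hB (by
      rintro rfl
      exact hcon.2 (by simpa using hAB.sup_eq_top))
    apply hxS
    obtain ⟨s1, hs1, d1, ⟨a, ha, rfl⟩, e1⟩ := Submodule.mem_sup.1 h1
    obtain ⟨s2, hs2, d2, ⟨b, hb, rfl⟩, e2⟩ := Submodule.mem_sup.1 h2
    have h3 : (a - b : D) = 0 := by
      have : ((a - b : D) : M) = s2 - s1 := by
        simp at e1 e2 ⊢
        rw [sub_eq_sub_iff_add_eq_add, add_comm _ s1, e1, e2]
      have h4 : ((a - b : D) : M) ∈ sSup S := this ▸ sub_mem hs2 hs1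
      have := Submodule.disjoint_def.1 hD.disjoint _ h4 (a - b : D).2
      exact_mod_cast this
    have h5 : a = b := sub_eq_zero.1 h3
    have h6 : a = 0 := Submodule.disjoint_def.1 hAB.disjoint a ha (h5 ▸ hb)
    rw [← e1, h6]
    simpa using hs1

lemma exists_max_disjoint {M : Type u} [AddCommGroup M] [Module R M] (A B : Submodule R M)
    (h : Disjoint A B) : ∃ C, B ≤ C ∧ Disjoint A C ∧ ∀ D, C ≤ D → Disjoint A D → D = C := by
  obtain ⟨C, hBC, hC⟩ := zorn_le_nonempty₀ {C : Submodule R M | Disjoint A C} (by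
    intro c hc hchain y hy
    refine ⟨sSup c, ?_, fun z hz => le_sSup hz⟩
    have : DirectedOn (· ≤ ·) c := hchain.directedOn
    exact this.disjoint_sSup_right.2 fun z hz => hc hz) B h
  exact ⟨C, hBC, hC.prop, fun D hCD hD => le_antisymm (hC.le_of_ge hD hCD) hCD⟩

lemma Indec.uniform {E : Type u} [AddCommGroup E] [Module R E] (h : Indec R E)
    (hE : Module.Injective R E) (A B : Submodule R E) (hAB : Disjoint A B) : A = ⊥ ∨ B = ⊥ := by
  obtain ⟨B', hB, hAB', hBmax⟩ := exists_max_disjoint A B hAB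
  obtain ⟨A', hA, hd, hAmax⟩ := exists_max_disjoint B' A hAB'.symm
  have hBmax' : ∀ D, B' ≤ D → Disjoint A' D → D = B' :=
    fun D h1 h2 => hBmax D h1 (h2.mono_left hA)
  -- projection
  let j : (A' × B') →ₗ[R] E := A'.subtype.coprod B'.subtype
  have hj : Function.Injective j := by
    rw [← LinearMap.ker_eq_bot]
    refine LinearMap.ker_coprod_of_disjoint_range _ _ (by simpa using hd.symm) |>.trans ?_
    simp
  obtain ⟨f, hf⟩ := hE.out j hj (A'.subtype ∘ₗ LinearMap.fst R A' B')
  have hfa : ∀ a ∈ A', f a = a := fun a ha => by simpa [j] using hf (⟨a, ha⟩, 0)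
  have hfb : ∀ b ∈ B', f b = 0 := fun b hb => by simpa [j] using hf (0, ⟨b, hb⟩)
  have hker : LinearMap.ker f = B' := by
    refine hBmax' _ (fun b hb => hfb b hb) ?_
    rw [Submodule.disjoint_def]
    intro a ha ha'
    rw [← hfa a ha]; exact ha'
  have hr : LinearMap.range f = A' := by
    refine hAmax _ (fun a ha => ⟨a, hfa a ha⟩) ?_
    rw [Submodule.disjoint_def]
    rintro b hb ⟨e, rfl⟩
    have : e ∈ B' := by
      have : B' ⊔ Submodule.span R {e} = B' := by
        refine hBmax' _ le_sup_left ?_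
        rw [Submodule.disjoint_def]
        intro a ha hae
        obtain ⟨b', hb', z, hz, rfl⟩ := Submodule.mem_sup.1 hae
        obtain ⟨r, rfl⟩ := Submodule.mem_span_singleton.1 hz
        have h1 := hfa _ ha
        rw [map_add, hfb _ hb', zero_add, map_smul] at h1
        exact Submodule.disjoint_def.1 hd _ (h1 ▸ B'.smul_mem r hb) ha
      rw [← this]
      exact Submodule.mem_sup_right (Submodule.mem_span_singleton_self e)
    exact hfb e this
  have hA'i : Module.Injective R A' := by
    refine inj_retract hE A'.subtype (f.codRestrict A' fun e => hr ▸ ⟨e, rfl⟩) ?_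
    intro a
    ext
    simpa using hfa a a.2
  rcases h.2 A' hA'i with h1 | h1
  · left; exact le_bot_iff.1 (h1 ▸ hA)
  · right
    rw [h1, disjoint_top] at hd
    exact le_bot_iff.1 (hd ▸ hB)

lemma Indec.embed {E E' I : Type u} [AddCommGroup E] [Module R E] [AddCommGroup E'] [Module R E']
    (h : Indec R E) (hE : Module.Injective R E) (h' : Indec R E') (hE' : Module.Injective R E')
    (i : E' →ₗ[R] (I →₀ E)) (hi : Function.Injective i) : Nonempty (E' ≃ₗ[R] E) := by
  classical
  have := h'.1
  obtain ⟨x, hx⟩ := exists_ne (0 : E')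
  have hU := h'.uniform hE'
  have fin : ∀ s : Finset I, (∀ k ∈ s, LinearMap.ker (Finsupp.lapply k ∘ₗ i) ≠ ⊥) →
      s.inf (fun k => LinearMap.ker (Finsupp.lapply (R := R) k ∘ₗ i)) ≠ ⊥ := by
    intro s
    induction s using Finset.induction_on with
    | empty =>
      intro _
      simp
    | insert a s ha ih =>
      intro hs hbot
      rw [Finset.inf_insert] at hbot
      rcases hU _ _ (disjoint_iff.2 hbot) with h1 | h1
      · exact hs a (Finset.mem_insert_self _ _) h1
      · exact ih (fun k hk => hs k (Finset.mem_insert_of_mem hk)) h1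
  have : ∃ k, LinearMap.ker (Finsupp.lapply (R := R) k ∘ₗ i) = ⊥ := by
    by_contra! hcon
    have h1 := fin (i x).support fun k _ => hcon k
    have h2 : Disjoint ((i x).support.inf
        (fun k => LinearMap.ker (Finsupp.lapply (R := R) k ∘ₗ i))) (Submodule.span R {x}) := by
      rw [Submodule.disjoint_def]
      intro y hy hyx
      obtain ⟨r, rfl⟩ := Submodule.mem_span_singleton.1 hyx
      apply hi
      rw [map_zero]
      ext k
      by_cases hk : k ∈ (i x).support
      · exact (Submodule.mem_finsetInf.1 hy) k hk
      · simp at hk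
        simp [hk]
    rcases hU _ _ h2 with h3 | h3
    · exact h1 h3
    · exact hx (by simpa using h3)
  obtain ⟨k, hk⟩ := this
  set f := Finsupp.lapply (R := R) k ∘ₗ i
  have hf : Function.Injective f := LinearMap.ker_eq_bot.1 hk
  have e := LinearEquiv.ofInjective f hf
  rcases h.2 _ (inj_equiv hE' e) with h1 | h1
  · exact (hx (hf (by simpa using LinearMap.congr_fun (LinearMap.range_eq_bot.1 h1) x))).elim
  · exact ⟨LinearEquiv.ofBijective f ⟨hf, LinearMap.range_eq_top.1 h1⟩⟩

lemma SI.acc {E : Type u} [AddCommGroup E] [Module R E] (h : SI R E) (J : Ideal R) :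
    ∃ F : Finset R, (∀ r ∈ F, r ∈ J) ∧ ∀ e : E, (∀ r ∈ F, r • e = 0) → ∀ r ∈ J, r • e = 0 := by
  classical
  by_contra! hcon
  obtain ⟨f, hf1, hf2⟩ := exists_seq_of_forall_finset_exists
    (fun p : R × E => p.1 ∈ J ∧ p.1 • p.2 ≠ 0) (fun p q => p.1 • q.2 = 0) (by
      intro s hs
      obtain ⟨e, he, r, hr, hre⟩ := hcon (s.image Prod.fst) (by
        intro r hr
        obtain ⟨p, hp, rfl⟩ := Finset.mem_image.1 hr
        exact (hs p hp).1)
      exact ⟨(r, e), ⟨hr, hre⟩, fun p hp => he _ (Finset.mem_image_of_mem _ hp)⟩)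
  let K : Ideal R := Submodule.span R (Set.range fun n => (f n).1)
  have hK : ∀ r ∈ K, ∃ N, ∀ n ≥ N, r • (f n).2 = 0 := by
    intro r hr
    induction hr using Submodule.span_induction with
    | mem x hx =>
      obtain ⟨m, rfl⟩ := hx
      exact ⟨m + 1, fun n hn => hf2 m n hn⟩
    | zero => exact ⟨0, by simp⟩
    | add x y _ _ hx hy =>
      obtain ⟨a, ha⟩ := hx
      obtain ⟨b, hb⟩ := hy
      refine ⟨max a b, fun n hn => ?_⟩
      rw [add_smul, ha n (le_trans (le_max_left _ _) hn), hb n (le_trans (le_max_right _ _) hn),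
        add_zero]
    | smul t x _ hx =>
      obtain ⟨a, ha⟩ := hx
      exact ⟨a, fun n hn => by rw [smul_eq_mul, mul_smul, ha n hn, smul_zero]⟩
  have hfin : ∀ r : K, (Function.support fun n : ULift.{u} ℕ => r.1 • (f n.down).2).Finite := by
    intro r
    obtain ⟨N, hN⟩ := hK r.1 r.2
    refine Set.Finite.subset ((Set.finite_lt_nat N).preimage
      (f := ULift.down) (ULift.down_injective.injOn)) ?_
    intro n hn
    by_contra hc
    exact hn (hN n.down (not_lt.1 hc))
  let g : K →ₗ[R] (ULift.{u} ℕ →₀ E) :=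
    { toFun := fun r => Finsupp.ofSupportFinite _ (hfin r)
      map_add' := by
        intro a b
        ext n
        simp [Finsupp.ofSupportFinite_coe, add_smul]
      map_smul' := by
        intro a b
        ext n
        simp [Finsupp.ofSupportFinite_coe, mul_smul] }
  obtain ⟨g', hg'⟩ := (Module.Baer.of_injective (h (ULift.{u} ℕ))) K g
  obtain ⟨n, hn⟩ := Infinite.exists_notMem_finset (g' 1).support
  have hmem : (f n.down).1 ∈ K := Submodule.subset_span ⟨n.down, rfl⟩
  have h1 := DFunLike.congr_fun (hg' _ hmem) n
  have h2 : g' (f n.down).1 = (f n.down).1 • g' 1 := by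
    rw [← map_smul, smul_eq_mul, mul_one]
  rw [h2] at h1
  simp only [Finsupp.mem_support_iff, not_not] at hn
  simp only [Finsupp.smul_apply, hn, smul_zero] at h1
  exact (hf1 n.down).2 h1.symm

lemma exists_closed {E : Type u} (x : E) (F G : List (R × E) → E) :
    ∃ A : Set E, x ∈ A ∧ #A ≤ #R + ℵ₀ ∧
      ∀ l : List (R × E), (∀ p ∈ l, p.2 ∈ A) → F l ∈ A ∧ G l ∈ A := by
  let ph : Set E → List (R × E) → Prop := fun B l => ∀ p ∈ l, p.2 ∈ B
  let st : Set E → Set E := fun B =>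
    B ∪ (F '' {l | ∀ p ∈ l, p.2 ∈ B} ∪ G '' {l | ∀ p ∈ l, p.2 ∈ B})
  let B : ℕ → Set E := fun n => st^[n] {x}
  have hB : ∀ n, B (n + 1) = st (B n) := fun n => Function.iterate_succ_apply' _ _ _
  have hmono : Monotone B := monotone_nat_of_le_succ fun n => by
    rw [hB]; exact Set.subset_union_left
  have hk : ℵ₀ ≤ #R + ℵ₀ := self_le_add_left _ _
  have hl : ∀ C : Set E, #C ≤ #R + ℵ₀ → #{l : List (R × E) | ∀ p ∈ l, p.2 ∈ C} ≤ #R + ℵ₀ := by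
    intro C hC
    have hs : {l : List (R × E) | ∀ p ∈ l, p.2 ∈ C} ⊆
        Set.range (fun l : List (R × C) => l.map (fun p => (p.1, (p.2 : E)))) := by
      intro l hl
      refine ⟨l.pmap (fun p hp => (p.1, ⟨p.2, hp⟩)) hl, ?_⟩
      simp [List.map_pmap]
    refine (mk_le_mk_of_subset hs).trans (mk_range_le.trans ?_)
    refine (mk_list_le_max _).trans (max_le hk ?_)
    rw [mk_prod, lift_id, lift_id]
    exact mul_le_of_le hk (self_le_add_right _ _) hC
  have hcard : ∀ n, #(B n) ≤ #R + ℵ₀ := by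
    intro n
    induction n with
    | zero =>
      change #({x} : Set E) ≤ _
      rw [mk_singleton]
      exact one_le_aleph0.trans hk
    | succ n ih =>
      rw [hB]
      refine (mk_union_le _ _).trans (add_le_of_le hk ih ?_)
      refine (mk_union_le _ _).trans (add_le_of_le hk ?_ ?_) <;>
      exact mk_image_le.trans (hl _ ih)
  refine ⟨⋃ n, B n, Set.mem_iUnion.2 ⟨0, rfl⟩, ?_, ?_⟩
  · have := mk_iUnion_le_sum_mk_lift (f := fun n => B n)
    rw [lift_uzero] at this
    refine this.trans ((sum_le_lift_mk_mul_iSup_lift _).trans ?_)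
    refine mul_le_of_le hk (by simp) (ciSup_le' fun n => ?_)
    rw [lift_uzero]
    exact hcard n
  · intro l hl
    have : ∃ n, ∀ p ∈ l, p.2 ∈ B n := by
      induction l with
      | nil => exact ⟨0, by simp⟩
      | cons a l ih =>
        obtain ⟨n, hn⟩ := ih fun p hp => hl p (List.mem_cons_of_mem _ hp)
        obtain ⟨m, hm⟩ := Set.mem_iUnion.1 (hl a List.mem_cons_self)
        refine ⟨max n m, fun p hp => ?_⟩
        rcases List.mem_cons.1 hp with rfl | hp
        · exact hmono (le_max_right _ _) hm
        · exact hmono (le_max_left _ _) (hn p hp)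
    obtain ⟨n, hn⟩ := this
    constructor <;> refine Set.mem_iUnion.2 ⟨n + 1, ?_⟩ <;> rw [hB]
    · exact Or.inr (Or.inl ⟨l, hn, rfl⟩)
    · exact Or.inr (Or.inr ⟨l, hn, rfl⟩)

lemma SI.card_le {E : Type u} [AddCommGroup E] [Module R E] (h : SI R E) (hI : Indec R E) :
    #E ≤ #R + ℵ₀ := by
  classical
  have := hI.1
  obtain ⟨x, hx⟩ := exists_ne (0 : E)
  let F : List (R × E) → E := fun l =>
    if hl : ∃ y : E, ∀ p ∈ l, p.1 • y = p.2 then hl.choose else x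
  have hF : ∀ l : List (R × E), (∃ y : E, ∀ p ∈ l, p.1 • y = p.2) →
      ∀ p ∈ l, p.1 • F l = p.2 := by
    intro l hl
    simp only [F, dif_pos hl]
    exact hl.choose_spec
  let G : List (R × E) → E := fun l => (l.map fun p => p.1 • p.2).sum
  obtain ⟨A, hxA, hA, hcl⟩ := exists_closed x F G
  let N : Submodule R E :=
    { carrier := A
      zero_mem' := by simpa [G] using (hcl [] (by simp)).2
      add_mem' := by
        intro a b ha hb
        simpa [G] using (hcl [(1, a), (1, b)] (by simp [ha, hb])).2
      smul_mem' := by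
        intro r a ha
        simpa [G] using (hcl [(r, a)] (by simp [ha])).2 }
  have hN : Module.Injective R N := by
    apply Module.Baer.injective
    intro J g
    obtain ⟨g', hg'⟩ := (Module.Baer.of_injective h.inj) J (N.subtype ∘ₗ g)
    have hg1 : ∀ r (hr : r ∈ J), r • g' 1 = g ⟨r, hr⟩ := by
      intro r hr
      rw [← map_smul, smul_eq_mul, mul_one, hg' r hr]
      rfl
    obtain ⟨S, hSJ, hS⟩ := h.acc J
    let l : List (R × E) := S.toList.map fun r => (r, r • g' 1)
    have hlA : ∀ p ∈ l, p.2 ∈ A := by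
      intro p hp
      obtain ⟨r, hr, rfl⟩ := List.mem_map.1 hp
      have := hg1 r (hSJ r (Finset.mem_toList.1 hr))
      simp only [this]
      exact (g ⟨r, _⟩).2
    have hy := hF l ⟨g' 1, by
      intro p hp
      obtain ⟨r, hr, rfl⟩ := List.mem_map.1 hp
      rfl⟩
    have hyA : F l ∈ N := (hcl l hlA).1
    refine ⟨LinearMap.toSpanSingleton R N ⟨F l, hyA⟩, ?_⟩
    intro r hr
    ext
    have h0 := hS (F l - g' 1) (by
      intro s hs
      have := hy (s, s • g' 1) (List.mem_map.2 ⟨s, Finset.mem_toList.2 hs, rfl⟩)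
      rw [smul_sub, sub_eq_zero]
      exact this) r hr
    rw [smul_sub, sub_eq_zero, hg1 r hr] at h0
    simpa using h0
  rcases hI.2 N hN with h1 | h1
  · exact (hx (by have : x ∈ N := hxA
                  simpa [h1] using this)).elim
  · have : A = Set.univ := by
      have : (N : Set E) = Set.univ := by rw [h1]; rfl
      exact this
    rw [this, mk_univ] at hA
    exact hA

lemma SI.exists_finsupp {M E : Type u} [AddCommGroup M] [Module R M] [AddCommGroup E] [Module R E]
    (h : SI R M) 
    (hE : ∀ D : Submodule R M, Module.Injective R D → Indec R D → Nonempty (D ≃ₗ[R] E)) :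
    ∃ I : Type u, Nonempty (M ≃ₗ[R] (I →₀ E)) := by
  classical
  obtain ⟨S, hS, hP, -, hmax⟩ := zorn_family
    (fun D : Submodule R M => Module.Injective R D ∧ Indec R D) ∅ (by simp)
  simp only [Set.mem_empty_iff_false, false_and, exists_false] at hmax
  obtain ⟨C, hC, hCi⟩ := exists_compl_inj h.inj _ (h.inj_sSup S hS fun A hA => (hP A hA).1)
  have hC0 : C = ⊥ := by
    by_contra hne
    have : Nontrivial C := (Submodule.nontrivial_iff_ne_bot).2 hne
    obtain ⟨D, hD, hDI⟩ := (h.sub C hCi).exists_indec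
    have e := Submodule.equivSubtypeMap C D
    have hDI' := hDI.1
    have hn : Nontrivial (D.map C.subtype) := e.symm.toEquiv.nontrivial
    refine hmax (D.map C.subtype) ⟨inj_equiv hD e, hn, ?_⟩
      ((Submodule.nontrivial_iff_ne_bot).1 hn) 
      (hC.disjoint.mono_right (Submodule.map_subtype_le _ _)).symm
    intro A hA
    have := hDI.2 (A.map e.symm.toLinearMap) (inj_equiv hA (e.symm.submoduleMap A))
    rcases this with h1 | h1
    · left
      exact (Submodule.map_eq_bot_iff (e := e.symm) ).1 h1
    · right
      rw [eq_top_iff]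
      intro z _
      have hz : e.symm z ∈ A.map e.symm.toLinearMap := h1 ▸ Submodule.mem_top
      obtain ⟨a, ha, haz⟩ := hz
      exact e.symm.injective haz ▸ ha
  rw [hC0] at hC
  have htop : sSup S = ⊤ := by simpa using hC.sup_eq_top
  obtain ⟨e⟩ := exists_dec S hS
  have hc : ∀ A : S, Nonempty (A.1 ≃ₗ[R] E) := fun A => hE A.1 (hP A.1 A.2).1 (hP A.1 A.2).2
  have e2 := DFinsupp.mapRange.linearEquiv fun A : S => (hc A).some
  exact ⟨S, ⟨(LinearEquiv.ofTop _ htop).symm.trans (e.symm.trans (e2.trans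
    (finsuppLequivDFinsupp R).symm))⟩⟩

lemma sigma_iff (M : ModuleCat.{u} R) :
    (∀ I : Type u, Module.Injective R (⨁ _ : I, (M : Type u))) ↔ SI R M := by
  classical
  exact ⟨fun h I => inj_equiv (h I) (finsuppLEquivDirectSum R M I).symm,
    fun h I => inj_equiv (h I) (finsuppLEquivDirectSum R M I)⟩

lemma card_finsupp {E I : Type u} [AddCommGroup E] [Nontrivial E] (hE : #E ≤ #R + ℵ₀)
    (hI : #R + ℵ₀ < #I) : #(I →₀ E) = #I := by
  have : Infinite I := infinite_iff.2 ((self_le_add_left _ _).trans hI.le)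
  rw [mk_finsupp_of_infinite]
  exact max_eq_left (hE.trans hI.le)

lemma card_index {E I : Type u} [AddCommGroup E] [Nontrivial E] (hE : #E ≤ #R + ℵ₀)
    (hI : #R + ℵ₀ < #(I →₀ E)) : #(I →₀ E) = #I := by
  have hk : ℵ₀ ≤ #R + ℵ₀ := self_le_add_left _ _
  cases fintypeOrInfinite I
  · exfalso
    rw [mk_finsupp_of_fintype] at hI
    exact hI.not_ge ((power_le_power_right hE).trans (power_nat_le hk))
  · rw [mk_finsupp_of_infinite] at hI ⊢
    rcases lt_max_iff.1 hI with h | h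
    · exact max_eq_left (hE.trans h.le)
    · exact (h.not_ge hE).elim

end Aux

theorem stmt2 (R : Type u) [Ring R] :
    (∀ c : Cardinal.{u}, #R + ℵ₀ < c → Categorical R (SigmaInjective R) c) ↔
    (∃ c : Cardinal.{u}, #R + ℵ₀ < c ∧ Categorical R (SigmaInjective R) c) := by
  constructor
  · intro h
    exact ⟨Order.succ (#R + ℵ₀), Order.lt_succ _, h _ (Order.lt_succ _)⟩
  · rintro ⟨c, hc, ⟨M, hM, hMc⟩, huniq⟩
    have hM' : SI R M := (sigma_iff M).1 hM
    have hMn : Nontrivial M := by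
      rw [← one_lt_iff_nontrivial, hMc]
      exact (one_lt_aleph0.trans_le (self_le_add_left _ _)).trans hc
    obtain ⟨E, hEi, hEI⟩ := hM'.exists_indec
    have hE : SI R E := hM'.sub E hEi
    have hEn : Nontrivial E := hEI.1
    have hEc := hE.card_le hEI
    have key : ∀ (D : Type u) [AddCommGroup D] [Module R D], SI R D → Indec R D →
        Nonempty (D ≃ₗ[R] E) := by
      intro D _ _ hD hDI
      have hDn : Nontrivial D := hDI.1
      have hDc := hD.card_le hDI
      have hco : #R + ℵ₀ < #(c.out) := by rwa [mk_out]
      obtain ⟨e⟩ := huniq (ModuleCat.of R (c.out →₀ D)) (ModuleCat.of R (c.out →₀ E))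
        ((sigma_iff _).2 (hD.finsupp _)) ((sigma_iff _).2 (hE.finsupp _))
        ((card_finsupp hDc hco).trans (mk_out c)) ((card_finsupp hEc hco).trans (mk_out c))
      let k : c.out := Classical.choice (mk_ne_zero_iff.1 (pos_of_gt hco).ne')
      have e' : (c.out →₀ D) ≃ₗ[R] (c.out →₀ E) := e
      exact hEI.embed hE.inj hDI hD.inj (e'.toLinearMap ∘ₗ Finsupp.lsingle k)
        (e'.injective.comp (Finsupp.single_injective k))
    intro m hm
    have hmo : #R + ℵ₀ < #(m.out) := by rwa [mk_out]
    have rep : ∀ N : ModuleCat.{u} R, SigmaInjective R N → #N = m →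
        Nonempty (N ≃ₗ[R] (m.out →₀ E)) := by
      intro N hN hNm
      have hN' : SI R N := (sigma_iff N).1 hN
      obtain ⟨I, ⟨e⟩⟩ := hN'.exists_finsupp (E := E)
        fun D hD hDI => key D (hN'.sub D hD) hDI
      have h1 : #(I →₀ E) = m := e.toEquiv.cardinal_eq.symm.trans hNm
      have h2 : #I = m := (card_index hEc (h1 ▸ hm)).symm.trans h1
      obtain ⟨f⟩ := Cardinal.eq.1 (h2.trans (mk_out m).symm)
      exact ⟨e.trans (Finsupp.domLCongr f)⟩
    refine ⟨⟨ModuleCat.of R (m.out →₀ E), (sigma_iff _).2 (hE.finsupp _),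
      (card_finsupp hEc hmo).trans (mk_out m)⟩, ?_⟩
    intro N N' hN hN' hc1 hc2
    obtain ⟨e1⟩ := rep N hN hc1
    obtain ⟨e2⟩ := rep N' hN' hc2
    exact ⟨e1.trans e2.symm⟩
end

section
/- Let R be an associative ring with unity. If the class of all left R-modules is λ-categorical in some cardinal λ > card(R) + ℵ₀, then R is a semisimple ring; in particular every finitely generated left R-module is projective. -/
/-! Statement 11: if the class of all left `R`-modules is categorical in some cardinal
`> card R + ℵ₀`, then `R` is a semisimple ring; in particular every finitely generated
left `R`-module is projective. -/

universe u

open Cardinal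

theorem stmt11 (R : Type u) [Ring R]
    (h : ∃ c : Cardinal.{u}, #R + ℵ₀ < c ∧ Categorical R (fun _ => True) c) :
    IsSemisimpleRing R ∧
      ∀ (M : Type u) [AddCommGroup M] [Module R M],
        Module.Finite R M → Module.Projective R M := by
  have hss : IsSemisimpleRing R := by
    rcases subsingleton_or_nontrivial R with hR | hR
    · infer_instance
    obtain ⟨c, hc, -, hiso⟩ := h
    obtain ⟨m, hm⟩ := Ideal.exists_maximal R
    have hsimple : IsSimpleModule R (R ⧸ m) := isSimpleModule_iff_isCoatom.2 hm.out
    have : Nontrivial (R ⧸ m) := IsSimpleModule.nontrivial R _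
    have hRc : #R ≤ c := le_self_add.trans hc.le
    have hmc : #(R ⧸ m) ≤ c := (mk_le_of_surjective m.mkQ_surjective).trans hRc
    have hinf : Infinite c.out := by
      rw [infinite_iff, mk_out]
      exact (self_le_add_left _ _).trans hc.le
    obtain ⟨e⟩ := hiso (ModuleCat.of R (c.out →₀ R)) (ModuleCat.of R (c.out →₀ (R ⧸ m)))
      trivial trivial
      (by change #(c.out →₀ R) = c
          rw [mk_finsupp_of_infinite, mk_out, max_eq_left hRc])
      (by change #(c.out →₀ (R ⧸ m)) = c
          rw [mk_finsupp_of_infinite, mk_out, max_eq_left hmc])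
    have e' : (c.out →₀ R) ≃ₗ[R] (c.out →₀ (R ⧸ m)) := e
    obtain ⟨i⟩ : Nonempty c.out := inferInstance
    have h1 : IsSemisimpleModule R (c.out →₀ (R ⧸ m)) := inferInstance
    exact IsSemisimpleModule.of_injective (e'.toLinearMap ∘ₗ Finsupp.lsingle i)
      (e'.injective.comp (Finsupp.single_injective i))
  exact ⟨hss, fun M _ _ _ => Module.projective_of_isSemisimpleRing R M⟩
end

section
/- Let F be a countable field and V an infinite-dimensional F-vector space, and let R = T(F, V) be the trivial (square-zero) extension of F by V. Then R is a commutative local ring whose maximal ideal is T-nilpotent, and the class of flat R-modules is λ-categorical in all cardinals λ > card(R) + ℵ₀. -/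
/-! Statement 12: let `F` be a countable field, `V` an infinite-dimensional `F`-vector
space and `R = T(F, V)` the trivial square-zero extension.  Then `R` is a (commutative)
local ring whose maximal ideal (the set of non-invertible elements) is `T`-nilpotent,
and the class of flat `R`-modules is categorical in all cardinals `> card R + ℵ₀`. -/

universe u

open Cardinal

/-- A subset `I` of a ring is (left) `T`-nilpotent if for every sequence `(aₙ)` of
elements of `I` there is `n ≥ 1` with `a₀ * a₁ * ⋯ * a_{n-1} = 0`. -/
def IsTNilpotent {k : Type u} [Ring k] (I : Set k) : Prop :=
  ∀ a : ℕ → k, (∀ i, a i ∈ I) → ∃ n : ℕ, 1 ≤ n ∧ ((List.range n).map a).prod = 0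

section
variable (F V : Type u) [Field F] [AddCommGroup V] [Module F V]

/-- The right `F`-module structure on `V` coming from commutativity of `F`; it makes the
trivial square-zero extension `TrivSqZeroExt F V` a commutative ring whose multiplication
is `(a, v) * (b, w) = (a * b, a • w + b • v)`. -/
noncomputable instance instOpModule : Module Fᵐᵒᵖ V :=
  Module.compHom V ((RingHom.id F).fromOpposite mul_comm)

instance : IsCentralScalar F V := ⟨fun _ _ => rfl⟩

end

theorem aux_free {R : Type u} [CommRing R] [IsLocalRing R]
    (hm : IsLocalRing.maximalIdeal R * IsLocalRing.maximalIdeal R = ⊥)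
    (M : Type u) [AddCommGroup M] [Module R M] [Module.Flat R M] :
    ∃ ι : Type u, Nonempty (Module.Basis ι R M) := by
  let w := Module.Free.chooseBasis (IsLocalRing.ResidueField R)
    (TensorProduct R (IsLocalRing.ResidueField R) M)
  have ⟨v, eq⟩ := (TensorProduct.mk_surjective R M (IsLocalRing.ResidueField R)
    Ideal.Quotient.mk_surjective).comp_left w
  refine ⟨_, ⟨.mk (v := v) (Module.IsLocalRing.linearIndependent_of_flat _ ?_) ?_⟩⟩
  · have h := w.linearIndependent
    rw [← eq] at h
    exact h
  · set N := Submodule.span R (Set.range v) with hN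
    have h1 : N.map (TensorProduct.mk R (IsLocalRing.ResidueField R) M 1) = ⊤ := by
      rw [hN, Submodule.map_span, ← Submodule.restrictScalars_span R (IsLocalRing.ResidueField R)
        Ideal.Quotient.mk_surjective, Submodule.restrictScalars_eq_top_iff, ← Set.range_comp]
      have := w.span_eq
      rw [← eq] at this
      exact this
    have h2 : N ⊔ IsLocalRing.maximalIdeal R • (⊤ : Submodule R M) = ⊤ := by
      have := congrArg (Submodule.comap (TensorProduct.mk R (IsLocalRing.ResidueField R) M 1)) h1
      rw [Submodule.comap_map_eq, Submodule.comap_top] at this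
      refine Eq.trans ?_ this
      congr 1
      exact (LinearMap.ker_tensorProductMk (Q := M) (I := IsLocalRing.maximalIdeal R)).symm
    have h3 : IsLocalRing.maximalIdeal R • (⊤ : Submodule R M) ≤ N := by
      conv_lhs => rw [← h2]
      rw [Submodule.smul_sup, ← Submodule.mul_smul, hm, Submodule.bot_smul, sup_bot_eq]
      exact Submodule.smul_le_right
    rw [← h2]
    exact sup_le le_rfl h3

theorem aux_card {R : Type u} [CommRing R] [Nontrivial R] {M ι : Type u} [AddCommGroup M]
    [Module R M] (b : Module.Basis ι R M) (c : Cardinal.{u}) (hc : #R + ℵ₀ < c) (h : #M = c) :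
    #ι = c := by
  have e := b.repr.toEquiv.cardinal_eq
  have hR : #R < c := lt_of_le_of_lt (self_le_add_right _ _) hc
  have ha : ℵ₀ < c := lt_of_le_of_lt (self_le_add_left _ _) hc
  rcases finite_or_infinite ι with hf | hf
  · exfalso
    have := Fintype.ofFinite ι
    rw [h, mk_finsupp_of_fintype] at e
    have : #R ^ Fintype.card ι ≤ max #R ℵ₀ := power_nat_le_max
    rw [← e] at this
    exact absurd this (not_le.2 (max_lt hR ha))
  · rw [h, mk_finsupp_of_infinite] at e
    rcases max_choice #ι #R with h' | h'
    · rw [e, h']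
    · rw [h'] at e
      exact absurd e hR.ne'

theorem aux_cat {R : Type u} [CommRing R] [IsLocalRing R]
    (hm : IsLocalRing.maximalIdeal R * IsLocalRing.maximalIdeal R = ⊥)
    (c : Cardinal.{u}) (hc : #R + ℵ₀ < c) :
    Categorical R (fun M => Module.Flat R M) c := by
  have hR : #R < c := lt_of_le_of_lt (self_le_add_right _ _) hc
  have ha : ℵ₀ < c := lt_of_le_of_lt (self_le_add_left _ _) hc
  constructor
  · refine ⟨ModuleCat.of R (c.out →₀ R), (inferInstance : Module.Flat R (c.out →₀ R)), ?_⟩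
    have : Infinite c.out := by
      rw [Cardinal.infinite_iff, mk_out]; exact ha.le
    change #(c.out →₀ R) = c
    rw [mk_finsupp_of_infinite, mk_out, max_eq_left hR.le]
  · intro M N hM hN h1 h2
    have : Module.Flat R M := hM
    have : Module.Flat R N := hN
    obtain ⟨ι, ⟨b⟩⟩ := aux_free hm M
    obtain ⟨κ, ⟨b'⟩⟩ := aux_free hm N
    obtain ⟨e⟩ := Cardinal.eq.1 ((aux_card b c hc h1).trans (aux_card b' c hc h2).symm)
    exact ⟨b.equiv b' e⟩

theorem stmt12 (F V : Type u) [Field F] [Countable F] [AddCommGroup V] [Module F V]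
    (hV : ¬Module.Finite F V) :
    IsLocalRing (TrivSqZeroExt F V) ∧
      IsTNilpotent {x : TrivSqZeroExt F V | ¬IsUnit x} ∧
      ∀ c : Cardinal.{u}, #(TrivSqZeroExt F V) + ℵ₀ < c →
        Categorical (TrivSqZeroExt F V)
          (fun M => Module.Flat (TrivSqZeroExt F V) M) c := by
  have hu : ∀ x : TrivSqZeroExt F V, ¬IsUnit x ↔ x.fst = 0 := fun x => by
    rw [TrivSqZeroExt.isUnit_iff_isUnit_fst, isUnit_iff_ne_zero, not_not]
  have hmul : ∀ x y : TrivSqZeroExt F V, x.fst = 0 → y.fst = 0 → x * y = 0 := fun x y hx hy => by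
    ext <;> simp [hx, hy]
  have hl : IsLocalRing (TrivSqZeroExt F V) := by
    refine IsLocalRing.of_nonunits_add fun a b ha hb => ?_
    rw [mem_nonunits_iff, hu] at *
    simp [ha, hb]
  refine ⟨hl, ?_, ?_⟩
  · intro a ha
    refine ⟨2, by norm_num, ?_⟩
    have := hmul (a 0) (a 1) ((hu _).1 (ha 0)) ((hu _).1 (ha 1))
    simpa [List.range_succ] using this
  · intro c hc
    refine aux_cat ?_ c hc
    rw [eq_bot_iff, Ideal.mul_le]
    intro r hr s hs
    exact hmul r s ((hu _).1 hr) ((hu _).1 hs)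
end

section
/- Let F be a countable field and V an infinite-dimensional F-vector space, let S = T(F, V) be the trivial (square-zero) extension of F by V, and let R = S × S (the product ring). Then the class of flat R-modules is not λ-categorical in any cardinal λ > card(R) + ℵ₀. -/
/-! Statement 13: let `F` be a countable field, `V` an infinite-dimensional `F`-vector
space, `S = T(F, V)` the trivial square-zero extension, and `R = S × S`.  Then the class
of flat `R`-modules is not categorical in any cardinal `> card R + ℵ₀`. -/

universe u

open Cardinal

theorem aux_not_categorical (S : Type u) [CommRing S] [Nontrivial S] (c : Cardinal.{u})
    (hc : #(S × S) + ℵ₀ < c) :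
    ¬Categorical (S × S) (fun M => Module.Flat (S × S) M) c := by
  rintro ⟨-, h⟩
  have hc0 : ℵ₀ ≤ c := le_of_lt (lt_of_le_of_lt (self_le_add_left _ _) hc)
  have hcR : #(S × S) ≤ c := le_of_lt (lt_of_le_of_lt (self_le_add_right _ _) hc)
  have : Infinite c.out := by rw [Cardinal.infinite_iff, Cardinal.mk_out]; exact hc0
  let e : S × S := (1, 0)
  let I : Ideal (S × S) := Ideal.span {e}
  have heI : e ∈ I := Ideal.mem_span_singleton_self e
  have hI : ∀ x ∈ I, e * x = x := by
    intro x hx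
    obtain ⟨y, rfl⟩ := Ideal.mem_span_singleton'.1 hx
    ext <;> simp [e]
  have : Nontrivial I := ⟨⟨⟨e, heI⟩, 0, fun h0 => by
    have := congrArg (fun z : I => (z : S × S).1) h0
    simp [e] at this⟩⟩
  let r : (S × S) →ₗ[S × S] I :=
    (LinearMap.mulLeft (S × S) e).codRestrict I (fun x => I.mul_mem_right x heI)
  have : Module.Flat (S × S) I := by
    refine Module.Flat.of_retract I.subtype r ?_
    ext x : 1
    exact Subtype.ext (hI x x.2)
  have hM : #(c.out →₀ I) = c := by
    rw [Cardinal.mk_finsupp_lift_of_infinite]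
    simp only [Cardinal.lift_id, Cardinal.mk_out]
    exact max_eq_left ((Cardinal.mk_le_of_injective Subtype.val_injective).trans hcR)
  have hN : #(c.out →₀ (S × S)) = c := by
    rw [Cardinal.mk_finsupp_lift_of_infinite]
    simp only [Cardinal.lift_id, Cardinal.mk_out]
    exact max_eq_left hcR
  have hfl : Module.Flat (S × S) (c.out →₀ I) := by
    classical
    exact Module.Flat.of_linearEquiv (finsuppLEquivDirectSum (S × S) I c.out)
  obtain ⟨f⟩ := h (ModuleCat.of (S × S) (c.out →₀ I)) (ModuleCat.of (S × S) (c.out →₀ (S × S)))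
    hfl
    (inferInstanceAs (Module.Flat (S × S) (c.out →₀ (S × S)))) hM hN
  have f' : (c.out →₀ I) ≃ₗ[S × S] (c.out →₀ (S × S)) := f
  have hker : ∀ m : c.out →₀ I, e • m = m := by
    intro m
    ext1 i
    exact Subtype.ext (hI _ (m i).2)
  obtain ⟨i⟩ : Nonempty c.out := inferInstance
  have h1 : e • (Finsupp.single i (1 : S × S)) = Finsupp.single i 1 := by
    rw [← f'.apply_symm_apply (Finsupp.single i (1 : S × S)), ← map_smul, hker]
  have h2 := congrArg Prod.snd (DFunLike.congr_fun h1 i)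
  simp [e] at h2

theorem stmt13 (F V : Type u) [Field F] [Countable F] [AddCommGroup V] [Module F V]
    (hV : ¬Module.Finite F V) :
    ∀ c : Cardinal.{u}, #(TrivSqZeroExt F V × TrivSqZeroExt F V) + ℵ₀ < c →
      ¬Categorical (TrivSqZeroExt F V × TrivSqZeroExt F V)
        (fun M => Module.Flat (TrivSqZeroExt F V × TrivSqZeroExt F V) M) c := by
  intro c hc
  exact aux_not_categorical (TrivSqZeroExt F V) c hc
end

section
/- Let R be a commutative local artinian ring with unity. Then the class of injective R-modules is λ-categorical in all cardinals λ > card(R) + ℵ₀. -/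
/-! Statement 15: for a commutative local artinian ring `R`, the class of injective
`R`-modules is categorical in all cardinals `> card R + ℵ₀`. -/

universe u

open Cardinal

open IsLocalRing

/-- The socle of a module over a local ring. -/
def socl (R : Type u) [CommRing R] [IsLocalRing R] (M : Type u) [AddCommGroup M] [Module R M] :
    Submodule R M := Submodule.torsionBySet R M (maximalIdeal R)

lemma mem_socl {R : Type u} [CommRing R] [IsLocalRing R] {M : Type u} [AddCommGroup M]
    [Module R M] {x : M} : x ∈ socl R M ↔ ∀ a ∈ maximalIdeal R, a • x = 0 := by
  simp [socl, Submodule.mem_torsionBySet_iff]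

lemma max_nilp (R : Type u) [CommRing R] [IsLocalRing R] [IsArtinianRing R] :
    ∃ n : ℕ, (maximalIdeal R) ^ n = ⊥ := by
  obtain ⟨n, hn⟩ := IsArtinianRing.isNilpotent_jacobson_bot (R := R)
  refine ⟨n, ?_⟩
  rw [← IsLocalRing.jacobson_eq_maximalIdeal (⊥ : Ideal R) bot_ne_top]
  exact hn

lemma socl_ess {R : Type u} [CommRing R] [IsLocalRing R] [IsArtinianRing R] {M : Type u}
    [AddCommGroup M] [Module R M] (N : Submodule R M) (h : N ⊓ socl R M = ⊥) : N = ⊥ := by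
  classical
  rw [eq_bot_iff]
  intro x hx
  by_contra hx0
  have hx0 : x ≠ 0 := hx0
  have hex : ∃ n : ℕ, ∀ a ∈ maximalIdeal R ^ n, a • x = 0 := by
    obtain ⟨n, hn⟩ := max_nilp R
    refine ⟨n, fun a ha => ?_⟩
    rw [hn] at ha
    rw [(Submodule.mem_bot R).1 ha, zero_smul]
  have hs := Nat.find_spec hex
  have hm := fun k => Nat.find_min hex (m := k)
  generalize Nat.find hex = n at hs hm
  cases n with
  | zero => exact hx0 (by simpa using hs 1 (by simp))
  | succ n =>
    have h1 := hm n (Nat.lt_succ_self n)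
    push Not at h1
    obtain ⟨a, ha, hax⟩ := h1
    have : a • x ∈ N ⊓ socl R M := by
      refine ⟨N.smul_mem a hx, mem_socl.2 fun b hb => ?_⟩
      rw [← mul_smul]
      apply hs
      rw [pow_succ, mul_comm b]
      exact Ideal.mul_mem_mul ha hb
    rw [h] at this
    exact hax this

lemma card_bound {R : Type u} [CommRing R] [IsLocalRing R] [IsArtinianRing R] {M : Type u}
    [AddCommGroup M] [Module R M] (κ : Cardinal.{u}) (hκ : ℵ₀ ≤ κ) (h : #(socl R M) ≤ κ) :
    #M ≤ κ := by
  classical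
  obtain ⟨G, hG⟩ : ∃ G : Finset R, Ideal.span (G : Set R) = maximalIdeal R :=
    (isNoetherian_def.1 inferInstance (maximalIdeal R) : (maximalIdeal R).FG)
  have key : ∀ n : ℕ, #(Submodule.torsionBySet R M (maximalIdeal R ^ n : Ideal R)) ≤ κ := by
    intro n
    induction n with
    | zero =>
      refine le_trans ?_ (le_trans Cardinal.one_le_aleph0 hκ)
      rw [Cardinal.le_one_iff_subsingleton]
      refine ⟨fun x y => ?_⟩
      have : ∀ z : (Submodule.torsionBySet R M (maximalIdeal R ^ 0 : Ideal R)), (z : M) = 0 := by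
        intro z
        simpa using (Submodule.mem_torsionBySet_iff _ _).1 z.2 ⟨1, by simp⟩
      exact Subtype.ext ((this x).trans (this y).symm)
    | succ n ih =>
      set A := Submodule.torsionBySet R M (maximalIdeal R ^ (n+1) : Ideal R) with hA
      set B := Submodule.torsionBySet R M (maximalIdeal R ^ n : Ideal R) with hB
      have hGm : ∀ g ∈ G, g ∈ maximalIdeal R := fun g hg => hG ▸ Ideal.subset_span hg
      let f : A → (G → B) := fun x g => ⟨(g : R) • (x : M), by
        rw [Submodule.mem_torsionBySet_iff]
        rintro ⟨a, ha⟩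
        change a • (g : R) • (x : M) = 0
        rw [← mul_smul]
        exact (Submodule.mem_torsionBySet_iff _ _).1 x.2 ⟨a * g, by
          rw [pow_succ]; exact Ideal.mul_mem_mul ha (hGm _ g.2)⟩⟩
      let s := Function.invFun f
      have hs : ∀ x, f (s (f x)) = f x := fun x => Function.invFun_eq ⟨x, rfl⟩
      let φ : A → (G → B) × socl R M := fun x => (f x, ⟨(x : M) - s (f x), by
        rw [mem_socl]
        intro a ha
        have hle : maximalIdeal R ≤ Ideal.torsionOf R M ((x : M) - s (f x)) := by
          rw [← hG, Ideal.span_le]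
          intro g hg
          have := congrArg Subtype.val (congrFun (hs x) ⟨g, hg⟩)
          change g • ((s (f x) : A) : M) = g • (x : M) at this
          change g • ((x : M) - s (f x)) = 0
          rw [smul_sub, this, sub_self]
        exact hle ha⟩)
      have hφ : Function.Injective φ := by
        intro x y hxy
        have h1 : f x = f y := congrArg Prod.fst hxy
        have h2 : (x : M) - s (f x) = (y : M) - s (f y) :=
          congrArg (fun z => ((Prod.snd z : socl R M) : M)) hxy
        rw [h1] at h2
        exact Subtype.ext (sub_left_injective h2)
      refine (Cardinal.mk_le_of_injective hφ).trans ?_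
      rw [Cardinal.mk_prod, Cardinal.lift_id, Cardinal.lift_id]
      refine Cardinal.mul_le_of_le hκ ?_ h
      rw [← Cardinal.power_def]
      calc #B ^ #G ≤ κ ^ #G := Cardinal.power_le_power_right ih
        _ ≤ κ := by
          rw [Cardinal.mk_fintype]
          exact Cardinal.power_nat_le hκ
  obtain ⟨n, hn⟩ := max_nilp R
  refine le_trans ?_ (key n)
  refine Cardinal.mk_le_of_injective (f := fun x => ⟨x, ?_⟩) ?_
  · rw [Submodule.mem_torsionBySet_iff, hn]
    rintro ⟨a, ha⟩
    have : a = 0 := ha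
    simp [this]
  · intro x y hxy
    exact congrArg Subtype.val hxy

lemma basis_card {k : Type u} [Field k] {V : Type u} [AddCommGroup V] [Module k V]
    {c : Cardinal.{u}} (hc : ℵ₀ < c) (hk : #k < c) (hV : #V = c) : Module.rank k V = c := by
  have b := Module.Free.chooseBasis k V
  rw [Module.Free.rank_eq_card_chooseBasisIndex]
  generalize Module.Free.ChooseBasisIndex k V = ι at b
  have e : #V = #(ι →₀ k) := b.repr.toEquiv.cardinal_eq
  cases finite_or_infinite ι with
  | inl h =>
    have := Fintype.ofFinite ι
    rw [Cardinal.mk_finsupp_of_fintype] at e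
    have h2 : #V ≤ max #k ℵ₀ := e ▸ Cardinal.power_nat_le_max
    rw [hV] at h2
    exact absurd h2 (not_le.2 (max_lt hk hc))
  | inr h =>
    rw [Cardinal.mk_finsupp_of_infinite, hV] at e
    rcases max_choice #ι #k with h | h
    · rw [e, h]
    · rw [h] at e
      exact absurd e hk.ne'

lemma zorn_sub {R : Type u} [CommRing R] {M : Type u}
    [AddCommGroup M] [Module R M] (E0 A B : Submodule R M) (h : A ⊓ E0 ≤ B) :
    ∃ E, E0 ≤ E ∧ A ⊓ E ≤ B ∧ ∀ F, E ≤ F → A ⊓ F ≤ B → F ≤ E := by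
  obtain ⟨E, h0, h1⟩ := zorn_le_nonempty₀ {E : Submodule R M | A ⊓ E ≤ B} (by
    intro c hc hch y hy
    refine ⟨sSup c, ?_, fun z hz => le_sSup hz⟩
    change A ⊓ sSup c ≤ B
    rw [hch.directedOn.inf_sSup_eq]
    exact iSup₂_le fun z hz => hc hz) E0 h
  exact ⟨E, h0, h1.1, fun F hF hF2 => h1.2 hF2 hF⟩

lemma inj_of_retract {R : Type u} [CommRing R] {M N : Type u}
    [AddCommGroup M] [Module R M] [AddCommGroup N] [Module R N] [hM : Module.Injective R M]
    (i : N →ₗ[R] M) (p : M →ₗ[R] N) (h : ∀ x, p (i x) = x) : Module.Injective R N := by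
  refine ⟨fun X Y _ _ _ _ f hf g => ?_⟩
  obtain ⟨l, hl⟩ := hM.out f hf (i ∘ₗ g)
  exact ⟨p ∘ₗ l, fun x => by simp [hl, h]⟩

lemma iso_of_socl {R : Type u} [CommRing R] [IsLocalRing R] [IsArtinianRing R] {M N : Type u}
    [AddCommGroup M] [Module R M] [AddCommGroup N] [Module R N]
    [hM : Module.Injective R M] [hN : Module.Injective R N]
    (e : socl R M ≃ₗ[R] socl R N) : Nonempty (M ≃ₗ[R] N) := by
  obtain ⟨f, hf⟩ := hN.out (socl R M).subtype Subtype.val_injective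
    ((socl R N).subtype ∘ₗ e.toLinearMap)
  have hf' : ∀ x : socl R M, f x = e x := hf
  have hker : LinearMap.ker f = ⊥ := by
    apply socl_ess
    rw [eq_bot_iff]
    rintro x ⟨hx, hxs⟩
    have h1 := hf' ⟨x, hxs⟩
    have hx : f x = 0 := hx
    rw [hx] at h1
    have h2 : e ⟨x, hxs⟩ = 0 := Subtype.ext h1.symm
    rw [e.map_eq_zero_iff] at h2
    exact congrArg Subtype.val h2
  have hinj := LinearMap.ker_eq_bot.1 hker
  obtain ⟨g, hg⟩ := hM.out f hinj LinearMap.id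
  have hkg : LinearMap.ker g = ⊥ := by
    apply socl_ess
    rw [eq_bot_iff]
    rintro y ⟨hy, hys⟩
    have hy : g y = 0 := hy
    have h1 := hf' (e.symm ⟨y, hys⟩)
    rw [e.apply_symm_apply] at h1
    have h2 := hg (e.symm ⟨y, hys⟩)
    change _ = (((e.symm ⟨y, hys⟩ : socl R M)) : M) at h2
    rw [h1] at h2
    change g y = _ at h2
    rw [hy] at h2
    rw [← h2, map_zero] at h1
    exact h1.symm
  refine ⟨LinearEquiv.ofBijective f ⟨hinj, fun y => ⟨g y, ?_⟩⟩⟩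
  apply LinearMap.ker_eq_bot.1 hkg
  exact hg (g y)

lemma exists_hull {R : Type u} [CommRing R] [IsLocalRing R] [IsArtinianRing R] {I : Type u}
    [AddCommGroup I] [Module R I] [hI : Module.Injective R I] (S : Submodule R I)
    (hS : S ≤ socl R I) : ∃ E : Submodule R I, S ≤ E ∧ socl R I ⊓ E ≤ S ∧ Module.Injective R E := by
  obtain ⟨E, hSE, hE, hEmax⟩ := zorn_sub S (socl R I) S inf_le_right
  obtain ⟨C, -, hC, hCmax⟩ := zorn_sub ⊥ E ⊥ inf_le_right
  have hC' : ∀ x ∈ E, x ∈ C → x = 0 := fun x hx hx' => hC ⟨hx, hx'⟩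
  obtain ⟨g, hg⟩ := hI.out (C.mkQ ∘ₗ E.subtype) (by
    rw [← LinearMap.ker_eq_bot, eq_bot_iff]
    intro x hx
    have hx : C.mkQ (x : I) = 0 := hx
    rw [Submodule.mkQ_apply, Submodule.Quotient.mk_eq_zero] at hx
    exact Subtype.ext (hC' _ x.2 hx)) E.subtype
  have hg' : ∀ x ∈ E, g (C.mkQ x) = x := fun x hx => hg ⟨x, hx⟩
  have hD : LinearMap.ker (g ∘ₗ C.mkQ) ≤ C := by
    apply hCmax
    · intro x hx
      have : C.mkQ x = 0 := by rwa [Submodule.mkQ_apply, Submodule.Quotient.mk_eq_zero]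
      change g (C.mkQ x) = 0
      rw [this, map_zero]
    · rintro x ⟨hx, hx'⟩
      have hx' : g (C.mkQ x) = 0 := hx'
      rw [hg' x hx] at hx'
      exact hx'
  have hrange : LinearMap.range (g ∘ₗ C.mkQ) ≤ E := by
    apply hEmax
    · intro x hx
      exact ⟨x, hg' x hx⟩
    · rintro y ⟨hy, z, rfl⟩
      have hmz : ∀ a ∈ maximalIdeal R, a • z ∈ C := by
        intro a ha
        apply hD
        rw [LinearMap.mem_ker, map_smul]
        exact mem_socl.1 hy a ha
      by_cases hz : z ∈ C
      · have : C.mkQ z = 0 := by rwa [Submodule.mkQ_apply, Submodule.Quotient.mk_eq_zero]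
        change g (C.mkQ z) ∈ S
        rw [this, map_zero]
        exact S.zero_mem
      have hnot : ¬ (E ⊓ (C ⊔ Submodule.span R {z}) ≤ ⊥) := by
        intro hle
        exact hz (hCmax _ le_sup_left hle (Submodule.mem_sup_right (Submodule.mem_span_singleton_self z)))
      rw [SetLike.not_le_iff_exists] at hnot
      obtain ⟨e, ⟨heE, hez⟩, he0⟩ := hnot
      obtain ⟨c, hc, w, hw, hcw⟩ := Submodule.mem_sup.1 hez
      obtain ⟨r, rfl⟩ := Submodule.mem_span_singleton.1 hw
      have hr : IsUnit r := by
        by_contra hr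
        have hrm : r ∈ maximalIdeal R := (IsLocalRing.mem_maximalIdeal r).2 hr
        exact he0 (hC' e heE (hcw ▸ C.add_mem hc (hmz r hrm)))
      have hgz : r • g (C.mkQ z) = e := by
        rw [← hg' e heE, ← hcw, map_add, map_add, map_smul, map_smul]
        have : C.mkQ c = 0 := by rwa [Submodule.mkQ_apply, Submodule.Quotient.mk_eq_zero]
        rw [this, map_zero, zero_add]
      refine hE ⟨hy, ?_⟩
      obtain ⟨u, rfl⟩ := hr
      change g (C.mkQ z) ∈ E
      have : g (C.mkQ z) = (↑u⁻¹ : R) • e := by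
        rw [← hgz, ← mul_smul]; simp
      rw [this]
      exact E.smul_mem _ heE
  refine ⟨E, hSE, hE, inj_of_retract E.subtype
    ((g ∘ₗ C.mkQ).codRestrict E fun x => hrange ⟨x, rfl⟩) fun x => Subtype.ext (hg' x x.2)⟩

lemma exists_emb (R : Type u) [CommRing R] (M : Type u) [AddCommGroup M] [Module R M] :
    ∃ (I : Type u) (_ : AddCommGroup I) (_ : Module R I) (f : M →ₗ[R] I),
      Module.Injective R I ∧ Function.Injective f := by
  obtain ⟨⟨J, hJ, f, hf⟩⟩ := CategoryTheory.EnoughInjectives.presentation (ModuleCat.of R M)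
  exact ⟨J, inferInstance, inferInstance, f.hom,
    (Module.injective_iff_injective_object R J).2 hJ, (ModuleCat.mono_iff_injective f).1 hf⟩

theorem stmt15 (R : Type u) [CommRing R] [IsLocalRing R] [IsArtinianRing R] :
    ∀ c : Cardinal.{u}, #R + ℵ₀ < c →
      Categorical R (fun M => Module.Injective R M) c := by
  intro c hc
  have hc0 : ℵ₀ < c := lt_of_le_of_lt le_add_self hc
  have hcR : #R < c := lt_of_le_of_lt le_self_add hc
  letI : Field (R ⧸ maximalIdeal R) := Ideal.Quotient.field _
  have hck : #(R ⧸ maximalIdeal R) < c := lt_of_le_of_lt Cardinal.mk_quotient_le hcR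
  constructor
  · have : Infinite c.out := by
      rw [Cardinal.infinite_iff, Cardinal.mk_out]; exact hc0.le
    obtain ⟨I, _, _, f, hI, hf⟩ := exists_emb R (c.out →₀ (R ⧸ maximalIdeal R))
    have hcard : #(LinearMap.range f) = c := by
      rw [← (LinearEquiv.ofInjective f hf).toEquiv.cardinal_eq, Cardinal.mk_finsupp_of_infinite,
        Cardinal.mk_out]
      exact max_eq_left hck.le
    obtain ⟨E, hSE, hE, hEi⟩ := exists_hull (LinearMap.range f) (by
      rintro _ ⟨x, rfl⟩
      rw [mem_socl]
      intro a ha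
      rw [← map_smul]
      convert map_zero f
      ext i
      rw [Finsupp.smul_apply, Finsupp.zero_apply, Algebra.smul_def, Ideal.Quotient.algebraMap_eq,
        Ideal.Quotient.eq_zero_iff_mem.2 ha, zero_mul])
    refine ⟨ModuleCat.of R E, hEi, le_antisymm ?_ ?_⟩
    · change #E ≤ c
      refine card_bound (R := R) c hc0.le ?_
      rw [← hcard]
      refine Cardinal.mk_le_of_injective (f := fun x => ⟨((x : E) : I), hE ⟨?_, x.1.2⟩⟩) ?_
      · rw [SetLike.mem_coe, mem_socl]
        intro a ha
        exact congrArg Subtype.val (mem_socl.1 x.2 a ha)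
      · intro x y hxy
        have h3 : ((x : E) : I) = ((y : E) : I) :=
          congrArg (fun z : LinearMap.range f => (z : I)) hxy
        exact Subtype.ext (Subtype.ext h3)
    · change c ≤ #E
      rw [← hcard]
      exact Cardinal.mk_le_of_injective (Submodule.inclusion_injective hSE)
  · intro M N hM hN hMc hNc
    have hsoc : ∀ M : ModuleCat.{u} R, #M = c → #(socl R M) = c := by
      intro M hMc
      refine le_antisymm (hMc ▸ Cardinal.mk_subtype_le _) ?_
      by_contra hlt
      have := card_bound (R := R) (M := M) (max #(socl R M) ℵ₀) (le_max_right _ _) (le_max_left _ _)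
      rw [hMc] at this
      exact absurd this (not_le.2 (max_lt (not_le.1 hlt) hc0))
    letI iM : Module (R ⧸ maximalIdeal R) (socl R M) :=
      inferInstanceAs (Module (R ⧸ maximalIdeal R) (Submodule.torsionBySet R M (maximalIdeal R)))
    letI iN : Module (R ⧸ maximalIdeal R) (socl R N) :=
      inferInstanceAs (Module (R ⧸ maximalIdeal R) (Submodule.torsionBySet R N (maximalIdeal R)))
    obtain ⟨e⟩ := nonempty_linearEquiv_of_rank_eq
      ((basis_card hc0 hck (hsoc M hMc)).trans (basis_card hc0 hck (hsoc N hNc)).symm)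
    have hM : Module.Injective R M := hM
    have hN : Module.Injective R N := hN
    refine iso_of_socl (R := R) (M := M) (N := N)
      { e with map_smul' := fun r x => ?_ }
    exact e.map_smul (Ideal.Quotient.mk _ r) x
end

section
/- Let R be an associative ring with unity. If the class of locally injective left R-modules is λ-categorical in some cardinal λ > 2^(card(R) + ℵ₀), then R is left noetherian. -/
/-! Statement 16: if the class of locally injective left `R`-modules is categorical in
some cardinal `> 2^(card R + ℵ₀)`, then `R` is left noetherian. -/

universe u

open Cardinal

/-- A module `M` is locally injective if every finite subset of `M` is contained in an
injective submodule of `M`. -/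
def LocallyInjective (R : Type u) [Ring R] (M : Type u) [AddCommGroup M]
    [Module R M] : Prop :=
  ∀ s : Finset M, ∃ N : Submodule R M, (s : Set M) ⊆ (N : Set M) ∧ Module.Injective R N

theorem card_succ_pow (k n : Cardinal.{u}) (hk : k ^ n ≤ k) (hn : n ≤ k) (h0 : ℵ₀ ≤ k) :
    (Order.succ k) ^ n ≤ Order.succ k := by
  induction n using Cardinal.inductionOn with
  | _ T =>
  have hreg := Cardinal.isRegular_succ h0
  set S := (Order.succ k).ord.ToType with hS
  have hSc : #S = Order.succ k := by simp [hS]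
  have hbd : ∀ f : T → S, ∃ a, ∀ i, f i < a := by
    intro f
    have : ¬ IsCofinal (Set.range f) := by
      intro hc
      have h1 := Order.cof_le hc
      have h3 : Order.cof S = Order.succ k :=
        (Ordinal.cof_toType (Order.succ k).ord).trans hreg.cof_ord
      rw [h3] at h1
      have h2 : #(Set.range f) ≤ k := Cardinal.mk_range_le.trans hn
      exact absurd (h1.trans h2) (not_le.2 (Order.lt_succ k))
    rw [not_isCofinal_iff] at this
    obtain ⟨a, ha⟩ := this
    exact ⟨a, fun i => ha _ ⟨i, rfl⟩⟩
  have hsurj : Function.Surjective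
      (fun p : (Σ a : S, T → Set.Iio a) => (fun i => (p.2 i : S))) := by
    intro f
    obtain ⟨a, ha⟩ := hbd f
    exact ⟨⟨a, fun i => ⟨f i, ha i⟩⟩, rfl⟩
  have := Cardinal.mk_le_of_surjective hsurj
  rw [← hSc, Cardinal.power_def]
  refine this.trans ?_
  rw [Cardinal.mk_sigma]
  refine (Cardinal.sum_le_sum _ (fun _ => k) ?_).trans ?_
  · intro a
    have h1 : #(Set.Iio a) ≤ k := Order.lt_succ_iff.1 (Cardinal.mk_Iio_toType_ord_lt a)
    rw [← Cardinal.power_def]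
    exact (Cardinal.power_le_power_right h1).trans hk
  · rw [Cardinal.sum_const', hSc]
    exact (Cardinal.mul_le_max_of_aleph0_le_left (h0.trans (Order.le_succ k))).trans
      (max_le le_rfl (Order.le_succ k))

theorem baer_prod {R : Type u} [Ring R] {A B : Type u} [AddCommGroup A] [AddCommGroup B]
    [Module R A] [Module R B] (hA : Module.Baer R A) (hB : Module.Baer R B) :
    Module.Baer R (A × B) := by
  intro I g
  obtain ⟨a, ha⟩ := hA I ((LinearMap.fst R A B).comp g)
  obtain ⟨b, hb⟩ := hB I ((LinearMap.snd R A B).comp g)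
  exact ⟨a.prod b, fun x hx => Prod.ext (ha x hx) (hb x hx)⟩

theorem baer_pi {R : Type u} [Ring R] {T : Type u} {A : Type u} [AddCommGroup A]
    [Module R A] (hA : Module.Baer R A) : Module.Baer R (T → A) := by
  intro I g
  choose a ha using fun t => hA I ((LinearMap.proj t).comp g)
  exact ⟨LinearMap.pi a, fun x hx => funext fun t => ha t x hx⟩

theorem li_of_baer {R : Type u} [Ring R] {A : Type u} [AddCommGroup A]
    [Module R A] (hA : Module.Baer R A) : LocallyInjective R A := by
  intro s
  exact ⟨⊤, by simp, (hA.of_equiv (Submodule.topEquiv (R := R) (M := A)).symm).injective⟩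

theorem li_prod {R : Type u} [Ring R] {A B : Type u} [AddCommGroup A] [AddCommGroup B]
    [Module R A] [Module R B] (hA : LocallyInjective R A) (hB : LocallyInjective R B) :
    LocallyInjective R (A × B) := by
  classical
  intro s
  obtain ⟨P, hP, hP'⟩ := hA (s.image Prod.fst)
  obtain ⟨Q, hQ, hQ'⟩ := hB (s.image Prod.snd)
  refine ⟨P.prod Q, ?_, ?_⟩
  · intro x hx
    exact ⟨hP (by simpa using ⟨x.2, hx⟩), hQ (by simpa using ⟨x.1, hx⟩)⟩
  · exact (Module.Baer.of_equiv (Q := P × Q) (M := P.prod Q)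
      { toFun := fun x => ⟨(x.1, x.2), x.1.2, x.2.2⟩
        invFun := fun x => (⟨x.1.1, x.2.1⟩, ⟨x.1.2, x.2.2⟩)
        map_add' := fun _ _ => rfl
        map_smul' := fun _ _ => rfl
        left_inv := fun _ => rfl
        right_inv := fun _ => rfl }
      (baer_prod (Module.Baer.of_injective hP') (Module.Baer.of_injective hQ'))).injective

theorem li_finsupp {R : Type u} [Ring R] {T : Type u} {A : Type u} [AddCommGroup A]
    [Module R A] (hA : Module.Baer R A) : LocallyInjective R (T →₀ A) := by
  classical
  intro s
  let F : Finset T := s.biUnion Finsupp.support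
  refine ⟨Finsupp.supported A R (F : Set T), ?_, ?_⟩
  · intro x hx
    rw [SetLike.mem_coe, Finsupp.mem_supported]
    exact_mod_cast Finset.subset_biUnion_of_mem Finsupp.support hx
  · have e1 := Finsupp.supportedEquivFinsupp (M := A) (R := R) (F : Set T)
    have e2 := Finsupp.linearEquivFunOnFinite R A (F : Set T)
    exact (Module.Baer.of_equiv (e1.trans e2).symm (baer_pi hA)).injective

/-- The coinduced module. -/
def Coind (R : Type u) (D : Type u) [Ring R] [AddCommGroup D] : Type u := R →+ D

instance (R D : Type u) [Ring R] [AddCommGroup D] : AddCommGroup (Coind R D) :=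
  inferInstanceAs (AddCommGroup (R →+ D))

instance (R D : Type u) [Ring R] [AddCommGroup D] : FunLike (Coind R D) R D :=
  inferInstanceAs (FunLike (R →+ D) R D)

instance (R D : Type u) [Ring R] [AddCommGroup D] : AddMonoidHomClass (Coind R D) R D :=
  inferInstanceAs (AddMonoidHomClass (R →+ D) R D)

theorem Coind.ext {R D : Type u} [Ring R] [AddCommGroup D] {f g : Coind R D}
    (h : ∀ x, f x = g x) : f = g := DFunLike.ext _ _ h

theorem Coind.add_apply {R D : Type u} [Ring R] [AddCommGroup D] (f g : Coind R D) (x : R) :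
    (f + g) x = f x + g x := rfl

theorem Coind.sub_apply {R D : Type u} [Ring R] [AddCommGroup D] (f g : Coind R D) (x : R) :
    (f - g) x = f x - g x := rfl

theorem Coind.zero_apply {R D : Type u} [Ring R] [AddCommGroup D] (x : R) :
    (0 : Coind R D) x = 0 := rfl

instance (R D : Type u) [Ring R] [AddCommGroup D] : SMul R (Coind R D) :=
  ⟨fun r f => AddMonoidHom.comp (f : R →+ D) (AddMonoidHom.mulRight r)⟩

theorem Coind.smul_apply {R D : Type u} [Ring R] [AddCommGroup D] (r : R) (f : Coind R D) (x : R) :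
    (r • f) x = f (x * r) := rfl

instance (R D : Type u) [Ring R] [AddCommGroup D] : Module R (Coind R D) where
  one_smul f := Coind.ext fun x => by simp [Coind.smul_apply]
  mul_smul a b f := Coind.ext fun x => by simp [Coind.smul_apply, mul_assoc]
  smul_zero a := Coind.ext fun x => rfl
  smul_add a f g := Coind.ext fun x => rfl
  add_smul a b f := Coind.ext fun x => by
    simp [Coind.smul_apply, Coind.add_apply, mul_add]
  zero_smul f := Coind.ext fun x => by simp [Coind.smul_apply, Coind.zero_apply]

theorem coind_baer (R D : Type u) [Ring R] [AddCommGroup D] (hD : Module.Baer ℤ D) :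
    Module.Baer R (Coind R D) := by
  intro I g
  let g0 : I →+ D :=
    { toFun := fun x => g x 1
      map_zero' := by simp [Coind.zero_apply]
      map_add' := fun x y => by simp [Coind.add_apply] }
  obtain ⟨h, hh⟩ := hD.extension_property_addMonoidHom (I.toAddSubgroup.subtype : I →+ R)
    Subtype.val_injective g0
  let h' : Coind R D := h
  refine ⟨LinearMap.toSpanSingleton R _ h', fun x hx => Coind.ext fun s => ?_⟩
  rw [LinearMap.toSpanSingleton_apply, Coind.smul_apply]
  have h1 : h (s * x) = g0 ⟨s * x, I.mul_mem_left s hx⟩ := by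
    rw [← hh]; rfl
  refine h1.trans ?_
  have h2 : (⟨s * x, I.mul_mem_left s hx⟩ : I) = s • ⟨x, hx⟩ := rfl
  change g _ 1 = _
  rw [h2, map_smul, Coind.smul_apply, one_mul]

theorem finsupp_baer (S : Type u) : Module.Baer ℤ (S →₀ AddCircle (1 : ℚ)) := by
  have hs : ∀ {n : ℤ}, n ≠ 0 → Function.Surjective
      (fun a : S →₀ AddCircle (1 : ℚ) => n • a) := by
    intro n hn a
    refine ⟨a.mapRange (fun x => if x = 0 then 0 else DivisibleBy.div x n) (by simp), ?_⟩
    ext s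
    simp only [Finsupp.smul_apply, Finsupp.mapRange_apply]
    split_ifs with h
    · simp [h]
    · exact DivisibleBy.div_cancel _ hn
  let : DivisibleBy (S →₀ AddCircle (1 : ℚ)) ℤ :=
    divisibleByOfSMulRightSurj _ _ hs
  exact Module.Baer.of_divisible _

theorem card_circle (S : Type u) : #(S →₀ AddCircle (1 : ℚ)) ≤ max #S ℵ₀ := by
  have hc : Countable (AddCircle (1 : ℚ)) := Quotient.countable
  cases isEmpty_or_nonempty S
  · exact (Cardinal.mk_le_aleph0).trans (le_max_right _ _)
  obtain ⟨f, hf⟩ := hc.exists_injective_nat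
  classical
  let f' : AddCircle (1 : ℚ) → ℕ := fun x => if x = 0 then 0 else f x + 1
  have hf' : Function.Injective f' := by
    intro x y hxy
    simp only [f'] at hxy
    split_ifs at hxy with h1 h2 h2
    · rw [h1, h2]
    · exact hf (by omega)
  have := Cardinal.mk_le_of_injective (Finsupp.mapRange_injective (α := S) f' (by simp [f']) hf')
  rwa [Cardinal.mk_finsupp_nat] at this

theorem card_coind (R D : Type u) [Ring R] [AddCommGroup D] : #(Coind R D) ≤ #D ^ #R := by
  rw [Cardinal.power_def]
  exact Cardinal.mk_le_of_injective (f := fun f : Coind R D => (f : R → D)) DFunLike.coe_injective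

theorem core {R : Type u} [Ring R] {N J T S : Type u} [AddCommGroup N] [AddCommGroup J]
    [Module R N] [Module R J] (hN : Module.Baer R N) (e : N →ₗ[R] (T →₀ J))
    (he : Function.Injective e)
    (hS : ∀ (F : Finset T) (f : S → (F → J)), ¬ Function.Injective f)
    (I : ℕ → Ideal R) (hI : Monotone I) (r : ℕ → R) (hr : ∀ n, r n ∈ I (n + 1))
    (b : ℕ → S → N) (hb0 : ∀ n s, ∀ x ∈ I n, x • b n s = 0)
    (hb1 : ∀ n s t, s ≠ t → r n • (b n s - b n t) ≠ 0) : False := by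
  classical
  have hv : ∀ (n : ℕ) (F : Finset T), ∃ v : N, (∀ x ∈ I n, x • v = 0) ∧ r n • v ≠ 0 ∧
      ∀ i ∈ F, e v i = 0 := by
    intro n F
    have := hS F (fun s i => e (b n s) i)
    simp only [Function.Injective, not_forall] at this
    obtain ⟨s, t, hst, hne⟩ := this
    refine ⟨b n s - b n t, fun x hx => ?_, hb1 n s t hne, fun i hi => ?_⟩
    · rw [smul_sub, hb0 n s x hx, hb0 n t x hx, sub_zero]
    · have := congrFun hst ⟨i, hi⟩
      simp only at this
      rw [map_sub, Finsupp.sub_apply, this, sub_self]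
  choose v hv0 hv1 hv2 using hv
  let F : ℕ → Finset T := fun n => Nat.rec ∅ (fun n G => G ∪ (e (v n G)).support) n
  have hF : ∀ n, F (n + 1) = F n ∪ (e (v n (F n))).support := fun n => rfl
  have hFm : Monotone F := monotone_nat_of_le_succ fun n => by
    rw [hF]; exact Finset.subset_union_left
  let w : ℕ → N := fun n => v n (F n)
  have hw0 : ∀ n, ∀ x ∈ I n, x • w n = 0 := fun n => hv0 n _
  have hw1 : ∀ n, r n • w n ≠ 0 := fun n => hv1 n _
  have hw2 : ∀ n, ∀ i ∈ F n, e (w n) i = 0 := fun n => hv2 n _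
  have hw3 : ∀ n i, e (w n) i ≠ 0 → i ∈ F (n + 1) := fun n i hi => by
    rw [hF]; exact Finset.mem_union_right _ (Finsupp.mem_support_iff.2 hi)
  have hdisj : ∀ m n i, e (w m) i ≠ 0 → e (w n) i ≠ 0 → m = n := by
    intro m n i hm hn
    by_contra hne
    rcases lt_or_gt_of_ne hne with h | h
    · exact hn (hw2 n i (hFm (Nat.succ_le_of_lt h) (hw3 m i hm)))
    · exact hm (hw2 m i (hFm (Nat.succ_le_of_lt h) (hw3 n i hn)))
  have hmem : ∀ x : (⨆ n, I n : Ideal R), ∃ n, (x : R) ∈ I n := fun x =>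
    (Submodule.mem_iSup_of_directed I hI.directed_le).1 x.2
  have hfin : ∀ x : (⨆ n, I n : Ideal R),
      (Function.support fun n => (x : R) • w n).Finite := by
    intro x
    obtain ⟨n, hn⟩ := hmem x
    refine (Set.finite_lt_nat n).subset fun k hk => ?_
    by_contra hkn
    exact hk (hw0 k _ (hI (not_lt.1 hkn) hn))
  let g : (⨆ n, I n : Ideal R) →ₗ[R] N :=
    { toFun := fun x => ∑ᶠ n, (x : R) • w n
      map_add' := fun x y => by
        rw [← finsum_add_distrib (hfin x) (hfin y)]
        simp [add_smul]
      map_smul' := fun a x => by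
        rw [RingHom.id_apply, smul_finsum' a (hfin x)]
        simp [mul_smul] }
  obtain ⟨g', hg'⟩ := hN _ g
  have hi : ∀ n, ∃ i, e (r n • w n) i ≠ 0 := by
    intro n
    by_contra hcon
    push Not at hcon
    exact hw1 n (he (by rw [map_zero]; exact Finsupp.ext hcon))
  choose i hi using hi
  have hi' : ∀ n, e (w n) (i n) ≠ 0 := by
    intro n h0
    apply hi n
    rw [map_smul, Finsupp.smul_apply, h0, smul_zero]
  have hinj : Function.Injective i := fun m n hmn =>
    hdisj m n (i m) (hi' m) (by rw [hmn]; exact hi' n)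
  have hsupp : ∀ n, i n ∈ (e (g' 1)).support := by
    intro n
    rw [Finsupp.mem_support_iff]
    intro h0
    have hrm : r n ∈ (⨆ n, I n : Ideal R) := (le_iSup I (n + 1)) (hr n)
    have h1 : e (g' (r n)) (i n) = 0 := by
      have : r n = r n • (1 : R) := by simp
      rw [this, map_smul, map_smul, Finsupp.smul_apply, h0, smul_zero]
    rw [hg' _ hrm] at h1
    let ev : N →+ J := (Finsupp.applyAddHom (i n)).comp e.toAddMonoidHom
    have h2 : ev (∑ᶠ k, r n • w k) = 0 := h1
    rw [ev.map_finsum (hfin ⟨r n, hrm⟩), finsum_eq_single _ n] at h2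
    · exact hi n h2
    · intro k hk
      change e (r n • w k) (i n) = 0
      rw [map_smul, Finsupp.smul_apply]
      by_cases h3 : e (w k) (i n) = 0
      · rw [h3, smul_zero]
      · exact absurd (hdisj k n _ h3 (hi' n)) hk
  exact not_injective_infinite_finite
    (fun n => (⟨i n, hsupp n⟩ : (e (g' 1)).support))
    (fun m n h => hinj (congrArg Subtype.val h))

theorem exists_char {R : Type u} [Ring R] (I : Ideal R) (r : R) (hr : r ∉ I) :
    ∃ c : R →+ AddCircle (1 : ℚ), (∀ x ∈ I, c x = 0) ∧ c r ≠ 0 := by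
  have : (Submodule.Quotient.mk r : R ⧸ I) ≠ 0 := by
    rwa [Ne, Submodule.Quotient.mk_eq_zero]
  obtain ⟨c, hc⟩ := CharacterModule.exists_character_apply_ne_zero_of_ne_zero this
  refine ⟨AddMonoidHom.comp (c : (R ⧸ I) →+ AddCircle (1 : ℚ)) I.mkQ.toAddMonoidHom,
    fun x hx => ?_, hc⟩
  change c (Submodule.Quotient.mk x) = 0
  rw [(Submodule.Quotient.mk_eq_zero I).2 hx, map_zero]

theorem stmt16 (R : Type u) [Ring R]
    (h : ∃ c : Cardinal.{u}, (2 : Cardinal.{u}) ^ (#R + ℵ₀) < c ∧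
      Categorical R (fun M => LocallyInjective R (M : Type u)) c) :
    IsNoetherianRing R := by
  classical
  obtain ⟨c, hc, -, hcat⟩ := h
  by_contra hno
  have hwf : ¬ WellFounded ((· > ·) : Ideal R → Ideal R → Prop) := fun hw =>
    hno (isNoetherian_iff'.2 ⟨hw⟩)
  rw [RelEmbedding.wellFounded_iff_isEmpty, not_isEmpty_iff] at hwf
  obtain ⟨I⟩ := hwf
  have hIlt : ∀ n, I n < I (n + 1) := fun n => I.map_rel_iff.2 (Nat.lt_succ_self n)
  have hI : Monotone I := monotone_nat_of_le_succ fun n => (hIlt n).le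
  choose r hr hr' using fun n => SetLike.exists_of_lt (hIlt n)
  choose χ hχ hχ' using fun n => exists_char (I n) (r n) (hr' n)
  set k : Cardinal.{u} := 2 ^ (#R + ℵ₀) with hk
  have hν : ℵ₀ ≤ #R + ℵ₀ := le_add_self
  have hνk : #R + ℵ₀ ≤ k := (Cardinal.cantor _).le
  have h0k : ℵ₀ ≤ k := hν.trans hνk
  have hkp : k ^ (#R + ℵ₀) ≤ k := by
    rw [hk, ← Cardinal.power_mul, Cardinal.mul_eq_self hν]
  have hsp := card_succ_pow k _ hkp hνk h0k
  have hkpos : k ≠ 0 := (Cardinal.aleph0_pos.trans_le h0k).ne'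
  have hspos : Order.succ k ≠ 0 := (Cardinal.aleph0_pos.trans_le (h0k.trans (Order.le_succ k))).ne'
  let S : Type u := (Order.succ k).out
  have hSc : #S = Order.succ k := Cardinal.mk_out _
  let T : Type u := c.out
  have hTc : #T = c := Cardinal.mk_out _
  have h0c : ℵ₀ ≤ c := h0k.trans hc.le
  have : Infinite T := Cardinal.infinite_iff.2 (by rw [hTc]; exact h0c)
  let D (U : Type u) : Type u := U →₀ AddCircle (1 : ℚ)
  let J : Type u := Coind R (PUnit.{u+1} →₀ AddCircle (1 : ℚ))
  let N : Type u := Coind R (S →₀ AddCircle (1 : ℚ))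
  have hJ : Module.Baer R J := coind_baer R _ (finsupp_baer _)
  have hN : Module.Baer R N := coind_baer R _ (finsupp_baer _)
  have hJc : #J ≤ k := by
    refine (card_coind _ _).trans ?_
    have h1 : #(PUnit.{u+1} →₀ AddCircle (1 : ℚ)) ≤ k :=
      (card_circle _).trans (max_le (by simpa using Cardinal.one_le_aleph0.trans h0k) h0k)
    exact (Cardinal.power_le_power_right h1).trans
      ((Cardinal.power_le_power_left hkpos le_self_add).trans hkp)
  have hNc : #N ≤ Order.succ k := by
    refine (card_coind _ _).trans ?_
    have h1 : #(S →₀ AddCircle (1 : ℚ)) ≤ Order.succ k :=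
      (card_circle _).trans (max_le hSc.le (h0k.trans (Order.le_succ k)))
    exact (Cardinal.power_le_power_right h1).trans
      ((Cardinal.power_le_power_left hspos le_self_add).trans hsp)
  let b (U : Type u) (n : ℕ) (s : U) : Coind R (U →₀ AddCircle (1 : ℚ)) :=
    (Finsupp.singleAddHom s).comp (χ n)
  have hb : ∀ U n s x, b U n s x = Finsupp.single s (χ n x) := fun U n s x => rfl
  have : Nontrivial J := by
    refine ⟨b _ 0 PUnit.unit, 0, fun h => hχ' 0 ?_⟩
    have := DFunLike.congr_fun h (r 0)
    rw [hb, Coind.zero_apply] at this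
    simpa using this
  have hM1 : #(T →₀ J) = c := by
    rw [Cardinal.mk_finsupp_of_infinite, hTc]
    exact max_eq_left (hJc.trans hc.le)
  have hM2 : #(N × (T →₀ J)) = c := by
    rw [← Cardinal.mul_def, hM1]
    have hNz : #N ≠ 0 := Cardinal.mk_ne_zero N
    rw [Cardinal.mul_eq_right h0c (hNc.trans (Order.succ_le_of_lt hc)) hNz]
  obtain ⟨e⟩ := hcat (ModuleCat.of R (N × (T →₀ J))) (ModuleCat.of R (T →₀ J))
    (li_prod (li_of_baer hN) (li_finsupp hJ)) (li_finsupp hJ) hM2 hM1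
  let e' : (N × (T →₀ J)) ≃ₗ[R] (T →₀ J) := e
  refine core (S := S) hN (e'.toLinearMap.comp (LinearMap.inl R N (T →₀ J)))
    (e'.injective.comp LinearMap.inl_injective) ?_ I hI r hr (b S) ?_ ?_
  · intro F f hf
    have h1 := Cardinal.mk_le_of_injective hf
    rw [hSc, ← Cardinal.power_def] at h1
    have h2 : #J ^ #F ≤ k :=
      (Cardinal.power_le_power_right hJc).trans
        ((Cardinal.power_le_power_left hkpos
          ((Cardinal.mk_le_aleph0).trans hν)).trans hkp)
    exact absurd (h1.trans h2) (not_le.2 (Order.lt_succ k))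
  · intro n s x hx
    refine Coind.ext fun y => ?_
    rw [Coind.smul_apply, hb, hχ n _ ((I n).mul_mem_left y hx), Finsupp.single_zero]
    rfl
  · intro n s t hst h
    have h1 := DFunLike.congr_fun h (1 : R)
    rw [Coind.smul_apply, Coind.sub_apply, Coind.zero_apply, hb, hb, one_mul] at h1
    have h2 := DFunLike.congr_fun h1 s
    rw [Finsupp.sub_apply, Finsupp.single_eq_same, Finsupp.single_eq_of_ne hst] at h2
    exact hχ' n (by simpa using h2)
end
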